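/- arXiv:2511.18426 — 2 statements merged into one kernel-verified Lean document; each statement's English description precedes it below -/
import Mathlib

section
/- Let f be a squarefree polynomial in two variables over the complex numbers with zero constant term, and let R = ℂ[x,y]/(f). Then the R-linear map R → R ⊕ R sending g to (g·((∂f/∂x) mod (f)), g·((∂f/∂y) mod (f))) is injective. -/
open MvPolynomial

lemma aux_pderiv_zero (p : MvPolynomial (Fin 2) ℂ) (i : Fin 2) (h : p ∣ pderiv i p) :
    pderiv i p = 0 := by
  by_contra hne
  obtain ⟨q, hq⟩ := h
  have hp : p ≠ 0 := by rintro rfl; simp at hne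
  have hq0 : q ≠ 0 := by rintro rfl; simp at hq; exact hne hq
  have hd : p.totalDegree ≤ (pderiv i p).totalDegree := by
    rw [hq, totalDegree_mul_of_isDomain hp hq0]; omega
  have hlt : ∀ m ∈ (pderiv i p).support, (m.sum fun _ e => e) + 1 ≤ p.totalDegree := by
    intro m hm
    rw [mem_support_iff, coeff_pderiv] at hm
    have h1 : m + Finsupp.single i 1 ∈ p.support := by
      rw [mem_support_iff]; intro h; simp [h] at hm
    have := le_totalDegree h1
    rwa [Finsupp.sum_add_index' (by simp) (by simp), Finsupp.sum_single_index rfl] at this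
  obtain ⟨m, hm⟩ := support_nonempty.2 hne
  have h1 : (pderiv i p).totalDegree ≤ p.totalDegree - 1 := by
    apply Finset.sup_le
    intro m hm
    have := hlt m hm
    omega
  have := hlt m hm
  omega

lemma aux_const (p : MvPolynomial (Fin 2) ℂ) (h : ∀ i, pderiv i p = 0) :
    p = C (constantCoeff p) := by
  ext m
  rw [coeff_C]
  split_ifs with h0
  · subst h0; rfl
  · obtain ⟨i, hi⟩ : ∃ i, m i ≠ 0 := by
      by_contra! hc
      exact h0 (by ext i; simp [hc i])
    have h1 : m - Finsupp.single i 1 + Finsupp.single i 1 = m :=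
      tsub_add_cancel_of_le (by simpa [Nat.one_le_iff_ne_zero] using hi)
    have := coeff_pderiv (i := i) p (m - Finsupp.single i 1)
    rw [h i, h1, coeff_zero] at this
    rcases mul_eq_zero.1 this.symm with h2 | h2
    · exact h2
    · exact absurd h2 (Nat.cast_add_one_ne_zero _)

lemma aux_prime (f g p : MvPolynomial (Fin 2) ℂ) (hf : Squarefree f) (hp : Prime p)
    (hpf : p ∣ f) (hg : ∀ i, f ∣ g * pderiv i f) : p ∣ g := by
  by_contra hpg
  obtain ⟨h, rfl⟩ := hpf
  have hph : ¬ p ∣ h := fun hh => hp.not_isUnit (hf p (mul_dvd_mul_left p hh))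
  have hz : ∀ i, pderiv i p = 0 := by
    intro i
    apply aux_pderiv_zero
    have h1 : p ∣ g * pderiv i (p * h) := (dvd_mul_right p h).trans (hg i)
    have h2 := (hp.dvd_or_dvd h1).resolve_left hpg
    rw [pderiv_mul, dvd_add_left (dvd_mul_right _ _)] at h2
    exact (hp.dvd_or_dvd h2).resolve_right hph
  have hc := aux_const p hz
  apply hp.not_isUnit
  rw [hc]
  refine IsUnit.map C (isUnit_iff_ne_zero.2 fun h0 => hp.ne_zero ?_)
  rw [hc, h0, map_zero]

lemma aux_dvd (f g : MvPolynomial (Fin 2) ℂ) (hf : Squarefree f)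
    (hg : ∀ i, f ∣ g * pderiv i f) : f ∣ g := by
  suffices H : ∀ d : MvPolynomial (Fin 2) ℂ, d ∣ f → d ∣ g from H f dvd_rfl
  intro d
  induction d using UniqueFactorizationMonoid.induction_on_prime with
  | h₁ => intro h; exact absurd (zero_dvd_iff.1 h) hf.ne_zero
  | h₂ u hu => intro _; exact hu.dvd
  | h₃ a p ha hp ih =>
    intro h
    obtain ⟨k, rfl⟩ := ih ((dvd_mul_left a p).trans h)
    have hpg := aux_prime f _ p hf hp ((dvd_mul_right p a).trans h) hg
    have hpa : ¬ p ∣ a := fun hh => hp.not_isUnit (hf p ((mul_dvd_mul_left p hh).trans h))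
    rw [mul_comm p a]
    exact mul_dvd_mul_left a ((hp.dvd_or_dvd hpg).resolve_left hpa)

/-- For a squarefree `f ∈ ℂ[x,y]` with zero constant term and `R = ℂ[x,y]/(f)`,
the `R`-linear map `R → R ⊕ R`, `g ↦ (g·∂_x f, g·∂_y f)`, is injective
(left-exactness of the conormal sequence in the proof of Lemma 2.5). -/
theorem conormal_injective (f : MvPolynomial (Fin 2) ℂ) (hf : Squarefree f)
    (h0 : constantCoeff f = 0) :
    Function.Injective (fun g : MvPolynomial (Fin 2) ℂ ⧸ Ideal.span {f} =>
      ((g * Ideal.Quotient.mk (Ideal.span {f}) (pderiv 0 f),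
        g * Ideal.Quotient.mk (Ideal.span {f}) (pderiv 1 f)) :
        (MvPolynomial (Fin 2) ℂ ⧸ Ideal.span {f}) × (MvPolynomial (Fin 2) ℂ ⧸ Ideal.span {f}))) := by
  intro a b hab
  obtain ⟨a, rfl⟩ := Ideal.Quotient.mk_surjective a
  obtain ⟨b, rfl⟩ := Ideal.Quotient.mk_surjective b
  simp only [Prod.mk.injEq, ← map_mul, Ideal.Quotient.eq, Ideal.mem_span_singleton,
    ← sub_mul] at hab
  rw [Ideal.Quotient.eq, Ideal.mem_span_singleton]
  apply aux_dvd f _ hf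
  intro i
  fin_cases i
  · exact hab.1
  · exact hab.2
end

section
/- Let f be a polynomial in two variables over ℂ with zero constant term and let F be its image in the formal power series ring ℂ[[x,y]]. Suppose that F = u · g₁ ⋯ g_r, where u is a unit of ℂ[[x,y]], r ≥ 1, each g_i is irreducible in ℂ[[x,y]], and g_i and g_j are non-associated for i ≠ j. Then the Milnor number, the δ-invariant, and the number r of irreducible (formal) factors satisfy μ(f) = 2δ(f) − r + 1. -/
open MvPolynomial

set_option synthInstance.maxHeartbeats 1000000
set_option maxHeartbeats 2000000

/-- The local ring `R = ℂ[[x,y]]/(F)`, where `F` is the image in `ℂ[[x,y]]` of `f ∈ ℂ[x,y]`. -/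
def CurveGermRing (f : MvPolynomial (Fin 2) ℂ) : Type :=
  MvPowerSeries (Fin 2) ℂ ⧸ Ideal.span {(↑f : MvPowerSeries (Fin 2) ℂ)}

noncomputable instance (f : MvPolynomial (Fin 2) ℂ) : CommRing (CurveGermRing f) :=
  inferInstanceAs
    (CommRing (MvPowerSeries (Fin 2) ℂ ⧸ Ideal.span {(↑f : MvPowerSeries (Fin 2) ℂ)}))

noncomputable instance (f : MvPolynomial (Fin 2) ℂ) : Algebra ℂ (CurveGermRing f) :=
  inferInstanceAs
    (Algebra ℂ (MvPowerSeries (Fin 2) ℂ ⧸ Ideal.span {(↑f : MvPowerSeries (Fin 2) ℂ)}))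

/-- The Milnor number `μ(f) = dim_ℂ ℂ[[x,y]]/(∂f/∂x, ∂f/∂y)`. -/
noncomputable def milnorNumber (f : MvPolynomial (Fin 2) ℂ) : ℕ :=
  Module.finrank ℂ
    (MvPowerSeries (Fin 2) ℂ ⧸ Ideal.span
      {(↑(pderiv 0 f) : MvPowerSeries (Fin 2) ℂ), (↑(pderiv 1 f) : MvPowerSeries (Fin 2) ℂ)})

/-- The δ-invariant `δ(f) = dim_ℂ (O̅ / R)`, where `O̅` is the normalization of `R`, i.e. the
integral closure of `R = ℂ[[x,y]]/(F)` in its total ring of fractions `K`, and the quotient is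
by the canonical image of `R` in `O̅`. -/
noncomputable def deltaInvariant (f : MvPolynomial (Fin 2) ℂ) (K : Type) [CommRing K]
    [Algebra (CurveGermRing f) K] [Algebra ℂ K] [IsScalarTower ℂ (CurveGermRing f) K] : ℕ :=
  Module.finrank ℂ
    ((integralClosure (CurveGermRing f) K) ⧸
      LinearMap.range (Algebra.linearMap (CurveGermRing f) (integralClosure (CurveGermRing f) K)))

namespace MF

/-! ### Codimension -/

/-- codimension of a subspace -/
noncomputable def cod {M : Type*} [AddCommGroup M] [Module ℂ M] (N : Submodule ℂ M) : ℕ∞ :=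
  Module.length ℂ (M ⧸ N)

theorem cod_add {M M' : Type*} [AddCommGroup M] [Module ℂ M] [AddCommGroup M'] [Module ℂ M']
    (f : M →ₗ[ℂ] M') (N : Submodule ℂ M') :
    cod N = cod (N.comap f) + cod (N ⊔ LinearMap.range f) := by
  unfold cod
  refine Module.length_eq_add_of_exact (Submodule.mapQ (N.comap f) N f le_rfl)
    (Submodule.factor (le_sup_left : N ≤ N ⊔ LinearMap.range f)) ?_ ?_ ?_
  · rw [← LinearMap.ker_eq_bot, Submodule.ker_mapQ, ← le_bot_iff, Submodule.map_le_iff_le_comap]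
    intro x hx
    simpa using hx
  · exact Submodule.factor_surjective _
  · rw [LinearMap.exact_iff]
    ext y
    obtain ⟨y, rfl⟩ := Submodule.Quotient.mk_surjective _ y
    simp only [LinearMap.mem_ker, LinearMap.mem_range]
    rw [← Submodule.mkQ_apply, Submodule.factor_mk, Submodule.mkQ_apply,
      Submodule.Quotient.mk_eq_zero]
    constructor
    · intro h
      obtain ⟨n, hn, _, ⟨m, rfl⟩, rfl⟩ := Submodule.mem_sup.1 h
      refine ⟨Submodule.Quotient.mk m, ?_⟩
      rw [Submodule.mapQ_apply, eq_comm, Submodule.mkQ_apply, Submodule.Quotient.eq]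
      simpa using hn
    · rintro ⟨m, hm⟩
      obtain ⟨m, rfl⟩ := Submodule.Quotient.mk_surjective _ m
      rw [Submodule.mapQ_apply, eq_comm, Submodule.mkQ_apply, Submodule.Quotient.eq] at hm
      have : y = (y - f m) + f m := by abel
      rw [this]
      exact Submodule.add_mem_sup hm ⟨m, rfl⟩

theorem cod_top {M : Type*} [AddCommGroup M] [Module ℂ M] : cod (⊤ : Submodule ℂ M) = 0 := by
  unfold cod
  rw [Module.length_eq_zero_iff]
  exact Submodule.Quotient.subsingleton_iff.2 rfl

theorem cod_eq_zero {M : Type*} [AddCommGroup M] [Module ℂ M] {N : Submodule ℂ M}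
    (h : cod N = 0) : N = ⊤ := by
  unfold cod at h
  rw [Module.length_eq_zero_iff] at h
  exact Submodule.Quotient.subsingleton_iff.1 h

theorem cod_comap {M M' : Type*} [AddCommGroup M] [Module ℂ M] [AddCommGroup M'] [Module ℂ M']
    (f : M →ₗ[ℂ] M') (hf : Function.Surjective f) (N : Submodule ℂ M') :
    cod (N.comap f) = cod N := by
  rw [cod_add f N, LinearMap.range_eq_top.2 hf, sup_top_eq, cod_top, add_zero]

theorem cod_antitone {M : Type*} [AddCommGroup M] [Module ℂ M] {N N' : Submodule ℂ M}
    (h : N ≤ N') : cod N' ≤ cod N := by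
  unfold cod
  exact Module.length_le_of_surjective (Submodule.factor h) (Submodule.factor_surjective h)

theorem cod_map {M M' : Type*} [AddCommGroup M] [Module ℂ M] [AddCommGroup M'] [Module ℂ M']
    (f : M →ₗ[ℂ] M') (hf : Function.Injective f) (N : Submodule ℂ M) :
    cod (N.map f) = cod N + cod (LinearMap.range f) := by
  rw [cod_add f (N.map f), Submodule.comap_map_eq_of_injective hf,
    sup_eq_right.2 (LinearMap.map_le_range)]

/-- ideal codimension -/
noncomputable def icod {T : Type*} [CommRing T] [Algebra ℂ T] (I : Ideal T) : ℕ∞ :=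
  cod (I.restrictScalars ℂ)

theorem icod_eq {T : Type*} [CommRing T] [Algebra ℂ T] (I : Ideal T) :
    icod I = Module.length ℂ (T ⧸ I) :=
  (Submodule.Quotient.restrictScalarsEquiv ℂ I).length_eq

theorem icod_mul {T : Type*} [CommRing T] [IsDomain T] [Algebra ℂ T] {a b c : T} (ha : Prime a)
    (hac : ¬ a ∣ c) :
    icod (Ideal.span {a * b, c}) = icod (Ideal.span {a, c}) + icod (Ideal.span {b, c}) := by
  unfold icod
  rw [cod_add (LinearMap.mulLeft ℂ a), add_comm]
  congr 2
  · ext t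
    simp only [Submodule.mem_sup, Submodule.restrictScalars_mem, Ideal.mem_span_pair,
      LinearMap.mem_range, LinearMap.mulLeft_apply]
    constructor
    · rintro ⟨_, ⟨p, q, rfl⟩, _, ⟨s, rfl⟩, rfl⟩
      exact ⟨p * b + s, q, by ring⟩
    · rintro ⟨p, q, rfl⟩
      exact ⟨q * c, ⟨0, q, by ring⟩, a * p, ⟨p, rfl⟩, by ring⟩
  · ext t
    simp only [Submodule.mem_comap, Submodule.restrictScalars_mem, Ideal.mem_span_pair,
      LinearMap.mulLeft_apply]
    constructor
    · rintro ⟨p, q, h⟩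
      have h1 : a ∣ q * c := ⟨t - p * b, by rw [mul_sub, ← h]; ring⟩
      obtain ⟨q', rfl⟩ := (ha.dvd_or_dvd h1).resolve_right hac
      exact ⟨p, q', mul_left_cancel₀ ha.ne_zero (by rw [← h]; ring)⟩
    · rintro ⟨p, q, rfl⟩
      exact ⟨p, a * q, by ring⟩

theorem icod_equiv {T S : Type*} [CommRing T] [Algebra ℂ T] [CommRing S] [Algebra ℂ S]
    (e : T ≃ₐ[ℂ] S) (I : Ideal T) : icod (I.map e) = icod I := by
  unfold icod
  rw [← cod_comap e.toLinearMap e.surjective]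
  congr 1
  ext t
  simp [Ideal.mem_map_of_equiv]

/-! ### Order of univariate power series -/

theorem icod_order (c : PowerSeries ℂ) :
    icod (Ideal.span {c}) = c.order := by
  have hX : icod (Ideal.span {(PowerSeries.X : PowerSeries ℂ)}) = 1 := by
    rw [icod_eq, Module.length_eq_one_iff]
    have e : (PowerSeries ℂ ⧸ Ideal.span {(PowerSeries.X : PowerSeries ℂ)}) ≃ₗ[ℂ] ℂ := by
      refine (LinearEquiv.ofBijective
        (Submodule.liftQ ((Ideal.span {(PowerSeries.X : PowerSeries ℂ)}).restrictScalars ℂ)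
          (PowerSeries.coeff (R := ℂ) 0) ?_) ⟨?_, ?_⟩)
      · intro x hx
        simpa [Ideal.mem_span_singleton, PowerSeries.X_dvd_iff] using hx
      · rw [← LinearMap.ker_eq_bot, Submodule.ker_liftQ_eq_bot]
        intro x hx
        simpa [Ideal.mem_span_singleton, PowerSeries.X_dvd_iff] using hx
      · intro z
        exact ⟨Submodule.Quotient.mk (PowerSeries.C z), by
          rw [Submodule.liftQ_apply]; simp⟩
    exact (LinearEquiv.isSimpleModule_iff e).2 inferInstance
  have hn : ∀ n : ℕ, icod (Ideal.span {(PowerSeries.X : PowerSeries ℂ) ^ n}) = n := by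
    intro n
    induction n with
    | zero => simp [icod, cod_top]
    | succ n ih =>
      unfold icod at *
      rw [cod_add (LinearMap.mulLeft ℂ (PowerSeries.X : PowerSeries ℂ)), Nat.cast_succ]
      congr 1
      · rw [← ih]
        congr 1
        ext t
        simp only [Submodule.mem_comap, Submodule.restrictScalars_mem, Ideal.mem_span_singleton,
          LinearMap.mulLeft_apply, pow_succ']
        exact mul_dvd_mul_iff_left PowerSeries.X_ne_zero
      · rw [← hX]
        congr 1
        ext t
        simp only [Submodule.mem_sup, Submodule.restrictScalars_mem, Ideal.mem_span_singleton,
          LinearMap.mem_range, LinearMap.mulLeft_apply]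
        constructor
        · rintro ⟨_, ⟨p, rfl⟩, _, ⟨s, rfl⟩, rfl⟩
          exact ⟨PowerSeries.X ^ n * p + s, by ring⟩
        · rintro ⟨p, rfl⟩
          exact ⟨0, ⟨0, by ring⟩, _, ⟨p, rfl⟩, by ring⟩
  by_cases hc : c = 0
  · subst hc
    rw [PowerSeries.order_zero, eq_top_iff]
    refine ENat.forall_natCast_le_iff_le.1 (fun n _ => ?_)
    rw [← hn n]
    refine cod_antitone ?_
    intro x hx
    have : x = 0 := by simpa using hx
    rw [this]; exact zero_mem _
  · obtain ⟨n, hn'⟩ : ∃ n : ℕ, c.order = n := by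
      have := PowerSeries.order_eq_top.not.2 hc
      exact ⟨c.order.toNat, (ENat.natCast_toNat this).symm⟩
    rw [hn', ← hn n]
    congr 1
    rw [Ideal.span_singleton_eq_span_singleton]
    obtain ⟨d, hd⟩ := PowerSeries.X_pow_order_dvd (φ := c)
    rw [hn', ENat.toNat_natCast] at hd
    have hu : IsUnit d := by
      rw [PowerSeries.isUnit_iff_constantCoeff, isUnit_iff_ne_zero]
      intro h0
      rw [← PowerSeries.coeff_zero_eq_constantCoeff_apply] at h0
      have := PowerSeries.coeff_order (φ := c) hc
      rw [hn', ENat.toNat_natCast, hd] at this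
      apply this
      rw [PowerSeries.coeff_X_pow_mul']
      simp [h0]
    obtain ⟨v, rfl⟩ := hu
    rw [hd]
    exact Associated.symm ⟨v, rfl⟩

theorem order_deriv {c : PowerSeries ℂ} (h : PowerSeries.constantCoeff c = 0) :
    c.order = (PowerSeries.derivative ℂ c).order + 1 := by
  by_cases hc : c = 0
  · subst hc; simp
  obtain ⟨n, hn⟩ : ∃ n : ℕ, c.order = n :=
    ⟨c.order.toNat, (ENat.natCast_toNat (PowerSeries.order_eq_top.not.2 hc)).symm⟩
  have h1 := (PowerSeries.order_eq_nat).1 hn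
  cases n with
  | zero => exact absurd (by simpa using h) h1.1
  | succ n =>
    have : (PowerSeries.derivative ℂ c).order = n := by
      rw [PowerSeries.order_eq_nat]
      refine ⟨?_, fun i hi => ?_⟩
      · rw [PowerSeries.coeff_derivative]
        exact mul_ne_zero h1.1 (by exact_mod_cast Nat.succ_ne_zero n)
      · rw [PowerSeries.coeff_derivative, h1.2 _ (by omega), zero_mul]
    rw [this, hn]; norm_cast

end MF

namespace MF

theorem order_finprod {ι : Type*} (s : Finset ι) (a : ι → PowerSeries ℂ) :
    (∏ i ∈ s, a i).order = ∑ i ∈ s, (a i).order := by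
  classical
  induction s using Finset.induction_on with
  | empty => simp
  | insert i s hi ih => rw [Finset.prod_insert hi, Finset.sum_insert hi, PowerSeries.order_mul, ih]

theorem cod_pi {ι : Type*} [Fintype ι] [DecidableEq ι] {M : ι → Type*} [∀ i, AddCommGroup (M i)]
    [∀ i, Module ℂ (M i)] (p : ∀ i, Submodule ℂ (M i)) :
    cod (Submodule.pi Set.univ p) = ∑ i, cod (p i) := by
  unfold cod
  rw [(Submodule.quotientPi p).length_eq, Module.length_pi_of_fintype]

theorem order_eq_of_associated {a b : PowerSeries ℂ} (h : Associated a b) : a.order = b.order := by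
  rw [← icod_order, ← icod_order, Ideal.span_singleton_eq_span_singleton.2 h]

theorem cod_det {e : ℕ} (M : Matrix (Fin e) (Fin e) (PowerSeries ℂ)) (hM : M.det ≠ 0) :
    cod ((LinearMap.range (Matrix.toLin' M)).restrictScalars ℂ) = M.det.order := by
  set f := Matrix.toLin' M with hf
  have hinj : Function.Injective f := by
    rw [hf, Matrix.toLin'_apply']
    exact Matrix.mulVec_injective_of_det_ne_zero hM
  set N := LinearMap.range f
  let E : (Fin e → PowerSeries ℂ) ≃ₗ[PowerSeries ℂ] N := LinearEquiv.ofInjective f hinj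
  have hr : Module.finrank (PowerSeries ℂ) N = Module.finrank (PowerSeries ℂ) (Fin e → PowerSeries ℂ) :=
    E.finrank_eq.symm
  obtain ⟨bM, a, bN, hab⟩ := Submodule.exists_smith_normal_form_of_rank_eq
    (Pi.basisFun (PowerSeries ℂ) (Fin e)) hr
  let b1 := bN.map E.symm
  have hfb : ∀ i, f (b1 i) = a i • bM i := by
    intro i
    rw [← hab]
    have : f (b1 i) = ((E (b1 i) : N) : Fin e → PowerSeries ℂ) := rfl
    rw [this]
    simp [b1]
  let D : (Fin e → PowerSeries ℂ) →ₗ[PowerSeries ℂ] (Fin e → PowerSeries ℂ) :=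
    Matrix.toLin bM bM (Matrix.diagonal a)
  have hD : ∀ i, D (bM i) = a i • bM i := by
    intro i
    simp [D, Matrix.toLin_self, Matrix.diagonal_apply]
  let φ : (Fin e → PowerSeries ℂ) ≃ₗ[PowerSeries ℂ] (Fin e → PowerSeries ℂ) :=
    b1.equiv bM (Equiv.refl _)
  have hfD : f = D ∘ₗ φ.toLinearMap := by
    apply b1.ext
    intro i
    simp [φ, hfb, hD]
  have hdet : Associated M.det (∏ i, a i) := by
    have h1 := LinearMap.associated_det_comp_equiv D φ (LinearEquiv.refl _ _)
    have h2 : LinearMap.det (D ∘ₗ φ.toLinearMap) = M.det := by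
      rw [← hfD, hf, LinearMap.det_toLin']
    have h3 : LinearMap.det (D ∘ₗ (LinearEquiv.refl (PowerSeries ℂ) (Fin e → PowerSeries ℂ)).toLinearMap) = ∏ i, a i := by
      have : D ∘ₗ (LinearEquiv.refl (PowerSeries ℂ) (Fin e → PowerSeries ℂ)).toLinearMap = D := by
        ext; rfl
      rw [this, LinearMap.det_toLin, Matrix.det_diagonal]
    rwa [h2, h3] at h1
  rw [order_eq_of_associated hdet, order_finprod]
  have hN : N = (Submodule.pi Set.univ (fun i => Ideal.span {a i})).comap bM.equivFun.toLinearMap := by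
    have : N = LinearMap.range D := by
      change LinearMap.range f = _
      rw [hfD, LinearMap.range_comp_of_range_eq_top _ (LinearEquiv.range φ)]
    rw [this]
    have hDr : ∀ w i, bM.equivFun (D w) i = a i * bM.equivFun w i := by
      intro w i
      simp [D, Matrix.toLin_apply, Matrix.mulVec_diagonal, Finsupp.single_apply]
    ext v
    simp only [Submodule.mem_comap, Submodule.mem_pi, Set.mem_univ, true_implies,
      Ideal.mem_span_singleton, LinearMap.mem_range]
    constructor
    · rintro ⟨w, rfl⟩ i
      exact ⟨bM.equivFun w i, hDr w i⟩
    · intro h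
      choose w hw using h
      refine ⟨bM.equivFun.symm w, ?_⟩
      apply bM.equivFun.injective
      ext1 i
      rw [hDr, LinearEquiv.apply_symm_apply]
      exact (hw i).symm
  have h4 : N.restrictScalars ℂ = (Submodule.pi Set.univ
      (fun i => (Ideal.span {a i}).restrictScalars ℂ)).comap
      (bM.equivFun.restrictScalars ℂ).toLinearMap := by
    rw [hN]
    ext v
    simp [Submodule.mem_pi]
  rw [h4, cod_comap _ (bM.equivFun.restrictScalars ℂ).surjective, cod_pi]
  exact Finset.sum_congr rfl (fun i _ => icod_order (a i))

/-! ### Decomposition of `ℂ⟦t⟧` over `ℂ⟦t^e⟧` -/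

/-- The component of `c` -/
noncomputable def comp (e i : ℕ) (c : PowerSeries ℂ) : PowerSeries ℂ :=
  PowerSeries.mk (fun n => PowerSeries.coeff (n * e + i) c)

/-- recombination -/
noncomputable def dec (e : ℕ) (he : e ≠ 0) : (Fin e → PowerSeries ℂ) ≃ₗ[ℂ] PowerSeries ℂ where
  toFun v := ∑ i, PowerSeries.expand e he (v i) * PowerSeries.X ^ (i : ℕ)
  map_add' v w := by simp [add_mul, Finset.sum_add_distrib]
  map_smul' a v := by simp [Finset.smul_sum]
  invFun c i := comp e i c
  left_inv v := by
    ext i n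
    simp only [comp, PowerSeries.coeff_mk, map_sum, PowerSeries.coeff_mul_X_pow']
    rw [Finset.sum_eq_single i]
    · rw [if_pos (by omega), Nat.add_sub_cancel, mul_comm, PowerSeries.coeff_expand_mul]
    · intro j _ hj
      split_ifs with h
      · apply PowerSeries.coeff_expand_of_not_dvd
        rintro ⟨k, hk⟩
        apply hj
        ext
        have h1 : n * e + i = k * e + j := by rw [mul_comm k e, ← hk]; omega
        have h2 := congrArg (· % e) h1
        simpa [Nat.mod_eq_of_lt i.2, Nat.mod_eq_of_lt j.2] using h2.symm
      · rfl
    · simp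
  right_inv c := by
    ext n
    simp only [comp, map_sum, PowerSeries.coeff_mul_X_pow']
    have hlt : n % e < e := Nat.mod_lt _ (Nat.pos_of_ne_zero he)
    have hdm := Nat.div_add_mod n e
    rw [Finset.sum_eq_single ⟨n % e, hlt⟩]
    · rw [if_pos (Nat.mod_le _ _)]
      have : n - n % e = e * (n / e) := by omega
      rw [this, PowerSeries.coeff_expand_mul, PowerSeries.coeff_mk, mul_comm, hdm]
    · intro j _ hj
      split_ifs with h
      · apply PowerSeries.coeff_expand_of_not_dvd
        rintro ⟨k, hk⟩
        apply hj
        ext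
        have h1 : n = k * e + j := by rw [mul_comm k e, ← hk]; omega
        have h2 := congrArg (· % e) h1
        simpa [Nat.mod_eq_of_lt j.2] using h2.symm
      · rfl
    · simp

theorem dec_apply (e : ℕ) (he : e ≠ 0) (v : Fin e → PowerSeries ℂ) :
    dec e he v = ∑ i, PowerSeries.expand e he (v i) * PowerSeries.X ^ (i : ℕ) := rfl

theorem expand_inj (e : ℕ) (he : e ≠ 0) : Function.Injective (PowerSeries.expand (R := ℂ) e he) := by
  intro a b h
  ext n
  rw [← PowerSeries.coeff_expand_mul e he, h, PowerSeries.coeff_expand_mul]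

end MF

namespace MF

/-- power series in `x` -/
abbrev A := PowerSeries ℂ
/-- power series in `x`, `y` -/
abbrev T := PowerSeries A

instance : IsAdicComplete (IsLocalRing.maximalIdeal A) A := by
  have : IsLocalRing.maximalIdeal A = Ideal.span {PowerSeries.X} :=
    PowerSeries.maximalIdeal_eq_span_X
  rw [this]
  infer_instance

theorem mem_max_iff (a : A) : a ∈ IsLocalRing.maximalIdeal A ↔ PowerSeries.constantCoeff a = 0 := by
  rw [IsLocalRing.mem_maximalIdeal, mem_nonunits_iff, PowerSeries.isUnit_iff_constantCoeff,
    isUnit_iff_ne_zero, not_not]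

/-- distinguished polynomials -/
def Dist (W : Polynomial A) : Prop :=
  W.Monic ∧ ∀ i < W.natDegree, PowerSeries.constantCoeff (W.coeff i) = 0

theorem dist_iff (W : Polynomial A) : Dist W ↔ W.IsDistinguishedAt (IsLocalRing.maximalIdeal A) := by
  constructor
  · intro h
    refine ⟨⟨fun {n} hn => ?_⟩, h.1⟩
    rw [mem_max_iff]
    exact h.2 n hn
  · intro h
    exact ⟨h.monic, fun i hi => (mem_max_iff _).1 (h.toIsWeaklyEisensteinAt.mem hi)⟩

theorem order_res {G : T} {n : ℕ} (h0 : ∀ i < n, PowerSeries.constantCoeff (PowerSeries.coeff i G) = 0)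
    (hn : PowerSeries.constantCoeff (PowerSeries.coeff n G) ≠ 0) :
    (G.map (IsLocalRing.residue A)).order = n := by
  rw [PowerSeries.order_eq_nat]
  constructor
  · rw [PowerSeries.coeff_map, Ne, IsLocalRing.residue_eq_zero_iff, mem_max_iff]
    exact hn
  · intro i hi
    rw [PowerSeries.coeff_map, IsLocalRing.residue_eq_zero_iff, mem_max_iff]
    exact h0 i hi

theorem wprep {G : T} {n : ℕ} (h0 : ∀ i < n, PowerSeries.constantCoeff (PowerSeries.coeff i G) = 0)
    (hn : PowerSeries.constantCoeff (PowerSeries.coeff n G) ≠ 0) :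
    ∃ (W : Polynomial A) (h : T), Dist W ∧ W.natDegree = n ∧ IsUnit h ∧ G = (W : T) * h := by
  have ho := order_res h0 hn
  have hne : G.map (IsLocalRing.residue A) ≠ 0 := by
    intro h
    rw [h, PowerSeries.order_zero] at ho
    exact ENat.top_ne_natCast _ ho
  obtain ⟨W, h, H⟩ := PowerSeries.exists_isWeierstrassFactorization hne
  refine ⟨W, h, (dist_iff W).2 H.isDistinguishedAt, ?_, H.isUnit, H.eq_mul⟩
  rw [PowerSeries.IsWeierstrassFactorization.natDegree_eq_toNat_order_map H, ho]
  simp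

theorem Dist.order_coe {W : Polynomial A} (hW : Dist W) :
    ((W : T).map (IsLocalRing.residue A)).order = W.natDegree := by
  apply order_res
  · intro i hi
    rw [Polynomial.coeff_coe]
    exact hW.2 i hi
  · rw [Polynomial.coeff_coe, hW.1.coeff_natDegree]
    simp

theorem Dist.order_coe' {W : Polynomial A} (hW : Dist W) :
    ((W : T).map (Ideal.Quotient.mk (IsLocalRing.maximalIdeal A))).order.toNat = W.natDegree :=
  (congrArg ENat.toNat hW.order_coe).trans (ENat.toNat_natCast _)

theorem Dist.div {W : Polynomial A} (hW : Dist W) (G : T) :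
    ∃ (q : T) (r : Polynomial A), r.degree < W.natDegree ∧ G = (W : T) * q + r := by
  have hne : (W : T).map (IsLocalRing.residue A) ≠ 0 := by
    intro h
    have ho := hW.order_coe
    rw [h, PowerSeries.order_zero] at ho
    exact ENat.top_ne_natCast _ ho
  obtain ⟨q, r, H⟩ := PowerSeries.exists_isWeierstrassDivision G hne
  refine ⟨q, r, ?_, H.2⟩
  exact lt_of_lt_of_eq H.1 (congrArg _ hW.order_coe')

theorem Dist.uniq {W : Polynomial A} (hW : Dist W) {q q' : T} {r r' : Polynomial A}
    (hr : r.degree < W.natDegree) (hr' : r'.degree < W.natDegree)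
    (h : (W : T) * q + r = W * q' + r') : q = q' ∧ r = r' := by
  have hne : (W : T).map (IsLocalRing.residue A) ≠ 0 := by
    intro h
    have ho := hW.order_coe
    rw [h, PowerSeries.order_zero] at ho
    exact ENat.top_ne_natCast _ ho
  refine PowerSeries.IsWeierstrassDivisorAt.eq_of_mul_add_eq_mul_add
    (PowerSeries.IsWeierstrassDivisor.of_map_ne_zero hne) ?_ ?_ h
  · exact lt_of_lt_of_eq hr (congrArg _ hW.order_coe'.symm)
  · exact lt_of_lt_of_eq hr' (congrArg _ hW.order_coe'.symm)

theorem Dist.dvd {W : Polynomial A} (hW : Dist W) {P : Polynomial A} (h : (W : T) ∣ (P : T)) :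
    W ∣ P := by
  obtain ⟨q, hq⟩ := h
  rw [← Polynomial.modByMonic_add_div P W] at hq
  have hd := Polynomial.degree_modByMonic_lt P hW.1
  rw [Polynomial.degree_eq_natDegree hW.1.ne_zero] at hd
  have := (hW.uniq (q := ((P /ₘ W : Polynomial A) : T)) (q' := q) (r := P %ₘ W) (r' := 0) hd
    (by simp) (by rw [← hq]; push_cast; ring)).2
  exact (Polynomial.modByMonic_eq_zero_iff_dvd hW.1).1 this

/-- substitution `x ↦ t^N` -/
noncomputable abbrev psi (N : ℕ) (hN : N ≠ 0) : A →+* A :=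
  (PowerSeries.expand N hN : A →ₐ[ℂ] A).toRingHom

theorem psi_mul (N M : ℕ) (hN : N ≠ 0) (hM : M ≠ 0) (a : A) :
    psi N hN (psi M hM a) = psi (N * M) (mul_ne_zero hN hM) a := by
  exact (PowerSeries.expand_mul N hN M hM a).symm

theorem psi_one (h : (1 : ℕ) ≠ 0) (a : A) : psi 1 h a = a := by
  exact PowerSeries.expand_one_apply a

/-- has a Puiseux root -/
def HasRoot (V : Polynomial A) : Prop :=
  ∃ (N : ℕ) (hN : N ≠ 0) (ρ : A), Polynomial.eval₂ (psi N hN) ρ V = 0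

theorem HasRoot.of_comp {V : Polynomial A} {s : A}
    (h : HasRoot (V.comp (Polynomial.X + Polynomial.C s))) : HasRoot V := by
  obtain ⟨N, hN, ρ, h⟩ := h
  rw [Polynomial.eval₂_comp] at h
  exact ⟨N, hN, _, h⟩

theorem hasRoot_step {n : ℕ} (ih : ∀ m < n, 0 < m → ∀ W : Polynomial A, W.Monic → W.natDegree = m → HasRoot W)
    (V : Polynomial A) (hV : V.Monic) (hn : V.natDegree = n) (c : ℂ)
    (hc : (V.map PowerSeries.constantCoeff).eval c = 0)
    (hne : V.map PowerSeries.constantCoeff ≠ (Polynomial.X - Polynomial.C c) ^ n) : HasRoot V := by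
  apply HasRoot.of_comp (s := PowerSeries.C c)
  set V1 := V.comp (Polynomial.X + Polynomial.C (PowerSeries.C c)) with hV1
  have hm1 : V1.map PowerSeries.constantCoeff =
      (V.map PowerSeries.constantCoeff).comp (Polynomial.X + Polynomial.C c) := by
    rw [hV1, Polynomial.map_comp]; simp
  have hmon : V1.Monic := hV.comp_X_add_C _
  have hdeg : V1.natDegree = n := by
    rw [hV1, Polynomial.natDegree_comp, Polynomial.natDegree_X_add_C, mul_one, hn]
  have hex : ∃ k, PowerSeries.constantCoeff (V1.coeff k) ≠ 0 := ⟨n, by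
    rw [← hdeg, hmon.coeff_natDegree]; simp⟩
  classical
  set k := Nat.find hex
  have hk := Nat.find_spec hex
  have hk0 : ∀ i < k, PowerSeries.constantCoeff (V1.coeff i) = 0 := fun i hi => by
    have := Nat.find_min hex hi
    simpa using this
  have hkpos : 0 < k := by
    rw [Nat.pos_iff_ne_zero]
    intro h
    apply hk
    change PowerSeries.constantCoeff (V1.coeff k) = 0
    rw [h, ← Polynomial.coeff_map, hm1, Polynomial.coeff_zero_eq_eval_zero, Polynomial.eval_comp]
    simpa using hc
  have hkn : k < n := by
    have hle : k ≤ n := Nat.find_min' hex (by rw [← hdeg, hmon.coeff_natDegree]; simp)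
    refine lt_of_le_of_ne hle ?_
    intro hkn
    apply hne
    have h3 : V1.map PowerSeries.constantCoeff = Polynomial.X ^ n := by
      ext i
      rw [Polynomial.coeff_map, Polynomial.coeff_X_pow]
      rcases lt_trichotomy i n with h | h | h
      · rw [hk0 i (hkn ▸ h), if_neg h.ne]
      · rw [if_pos h, h, ← hdeg, hmon.coeff_natDegree]; simp
      · rw [if_neg h.ne', Polynomial.coeff_eq_zero_of_natDegree_lt (by rw [hdeg]; exact h)]; simp
    have h4 := congrArg (fun p => Polynomial.comp p (Polynomial.X - Polynomial.C c)) (hm1.symm.trans h3)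
    simpa [Polynomial.comp_assoc] using h4
  obtain ⟨W, h, hWd, hWn, hu, hWh⟩ := wprep (G := (V1 : T)) (n := k)
    (fun i hi => by rw [Polynomial.coeff_coe]; exact hk0 i hi) (by rw [Polynomial.coeff_coe]; exact hk)
  obtain ⟨N, hN, ρ, hρ⟩ := ih k hkn hkpos W hWd.1 hWn
  obtain ⟨Q, hQ⟩ := hWd.dvd ⟨h, hWh⟩
  exact ⟨N, hN, ρ, by rw [hQ, Polynomial.eval₂_mul, hρ, zero_mul]⟩

theorem exists_min_ratio {n : ℕ} (a : ℕ → A) (h : ∃ i < n, a i ≠ 0) :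
    ∃ i < n, a i ≠ 0 ∧ ∀ j < n, a j ≠ 0 →
      (a i).order.toNat * (n - j) ≤ (a j).order.toNat * (n - i) := by
  classical
  let s := (Finset.range n).filter (fun i => a i ≠ 0)
  have hs : s.Nonempty := by
    obtain ⟨i, hi, h⟩ := h
    exact ⟨i, by simp [s, hi, h]⟩
  obtain ⟨i, hi, hmin⟩ := Finset.exists_min_image s
    (fun i => ((a i).order.toNat : ℚ) / ((n - i : ℕ) : ℚ)) hs
  simp only [s, Finset.mem_filter, Finset.mem_range] at hi hmin
  refine ⟨i, hi.1, hi.2, fun j hj hj0 => ?_⟩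
  have := hmin j ⟨hj, hj0⟩
  have h1 : (0 : ℚ) < ((n - i : ℕ) : ℚ) := by exact_mod_cast (by omega)
  have h2 : (0 : ℚ) < ((n - j : ℕ) : ℚ) := by exact_mod_cast (by omega)
  rw [div_le_div_iff₀ h1 h2] at this
  exact_mod_cast this

theorem hasRoot (n : ℕ) : 0 < n → ∀ V : Polynomial A, V.Monic → V.natDegree = n → HasRoot V := by
  induction n using Nat.strong_induction_on with
  | _ n ih =>
  intro hn V' hV' hdeg'
  -- shift
  apply HasRoot.of_comp (s := PowerSeries.C ((n : ℂ)⁻¹) * (- V'.coeff (n-1)))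
  set s := PowerSeries.C ((n : ℂ)⁻¹) * (- V'.coeff (n-1)) with hs
  set V := V'.comp (Polynomial.X + Polynomial.C s) with hVdef
  have hV : V.Monic := hV'.comp_X_add_C _
  have hdeg : V.natDegree = n := by
    rw [hVdef, Polynomial.natDegree_comp, Polynomial.natDegree_X_add_C, mul_one, hdeg']
  have hnC : (n : ℂ) ≠ 0 := by exact_mod_cast hn.ne'
  have hcoeff : V.coeff (n-1) = 0 := by
    have h1 : V = Polynomial.taylor s V' := by rw [hVdef, Polynomial.taylor_apply]
    rw [h1, Polynomial.taylor_coeff]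
    have h2 : Polynomial.hasseDeriv (n-1) V' = Polynomial.C (V'.coeff (n-1)) +
        Polynomial.C (n : A) * Polynomial.X := by
      ext1 m
      rw [Polynomial.hasseDeriv_coeff, Polynomial.coeff_add, Polynomial.coeff_C,
        Polynomial.coeff_C_mul, Polynomial.coeff_X]
      match m with
      | 0 => simp
      | 1 =>
        have : 1 + (n - 1) = n := by omega
        rw [this, ← hdeg', hV'.coeff_natDegree, hdeg']
        obtain ⟨k, rfl⟩ : ∃ k, n = k + 1 := ⟨n - 1, by omega⟩
        simp
      | m + 2 =>
        rw [Polynomial.coeff_eq_zero_of_natDegree_lt (by omega)]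
        simp
    rw [h2]
    simp only [Polynomial.eval_add, Polynomial.eval_C, Polynomial.eval_mul, Polynomial.eval_X, hs]
    have h3 : (n : A) * PowerSeries.C ((n : ℂ)⁻¹) = 1 := by
      rw [← map_natCast PowerSeries.C, ← map_mul, mul_inv_cancel₀ hnC, map_one]
    rw [← mul_assoc, h3]; ring
  clear_value V
  by_cases hz : ∃ i < n, V.coeff i ≠ 0
  swap
  · push Not at hz
    refine ⟨1, one_ne_zero, 0, ?_⟩
    rw [Polynomial.eval₂_at_zero, hz 0 hn, map_zero]
  obtain ⟨i₀, hi₀, hne, hmin⟩ := exists_min_ratio (fun i => V.coeff i) hz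
  set p := (V.coeff i₀).order.toNat with hp
  set q := n - i₀ with hq
  have hq0 : q ≠ 0 := by omega
  have hcoefs : ∀ j, ∃ b : A, j < n → psi q hq0 (V.coeff j) = b * (PowerSeries.X ^ p) ^ (n - j) := by
    intro j
    by_cases hj : j < n
    swap
    · exact ⟨0, fun h => absurd h hj⟩
    have : (PowerSeries.X ^ p) ^ (n - j) ∣ psi q hq0 (V.coeff j) := by
      by_cases h0 : V.coeff j = 0
      · rw [h0, map_zero]; exact dvd_zero _
      obtain ⟨d, hd⟩ := PowerSeries.X_pow_order_dvd (φ := V.coeff j)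
      rw [hd, map_mul, map_pow]
      have hX : psi q hq0 PowerSeries.X = PowerSeries.X ^ q := PowerSeries.expand_X q hq0
      rw [hX, ← pow_mul, ← pow_mul]
      apply Dvd.dvd.mul_right
      apply pow_dvd_pow
      have := hmin j hj h0
      rw [mul_comm q]
      exact this
    obtain ⟨b, hb⟩ := this
    exact ⟨b, fun _ => by rw [hb, mul_comm]⟩
  choose b hb using hcoefs
  let R : Polynomial A := ∑ j ∈ Finset.range n, Polynomial.C (b j) * Polynomial.X ^ j
  have hRd : R.degree < n := by
    rw [← Polynomial.mem_degreeLT]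
    refine Submodule.sum_mem _ (fun j hj => ?_)
    rw [Polynomial.mem_degreeLT]
    refine lt_of_le_of_lt (Polynomial.degree_C_mul_X_pow_le _ _) ?_
    exact_mod_cast Finset.mem_range.1 hj
  let V2 : Polynomial A := Polynomial.X ^ n + R
  have hV2m : V2.Monic := Polynomial.monic_X_pow_add hRd
  have hV2d : V2.natDegree = n := by
    rw [Polynomial.natDegree_eq_of_degree_eq_some]
    rw [Polynomial.degree_add_eq_left_of_degree_lt] <;> rw [Polynomial.degree_X_pow]
    exact hRd
  have hV2c : ∀ j < n, V2.coeff j = b j := by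
    intro j hj
    simp only [V2, R, Polynomial.coeff_add, Polynomial.coeff_X_pow, if_neg hj.ne, zero_add,
      Polynomial.finsetSum_coeff, Polynomial.coeff_C_mul]
    rw [Finset.sum_eq_single j]
    · simp
    · intro i _ hi; simp [Ne.symm hi]
    · intro h; exact absurd (Finset.mem_range.2 hj) h
  have hscale : V.map (psi q hq0) = V2.scaleRoots (PowerSeries.X ^ p) := by
    ext1 j
    rw [Polynomial.coeff_map, Polynomial.coeff_scaleRoots, hV2d]
    rcases lt_trichotomy j n with h | h | h
    · rw [hV2c j h, hb j h]
    · rw [h, Nat.sub_self, pow_zero, mul_one]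
      conv_lhs => rw [← hdeg]
      conv_rhs => rw [← hV2d]
      rw [hV.coeff_natDegree, hV2m.coeff_natDegree, map_one]
    · rw [Polynomial.coeff_eq_zero_of_natDegree_lt (by omega),
        Polynomial.coeff_eq_zero_of_natDegree_lt (by omega), map_zero, zero_mul]
  have hV2root : HasRoot V2 := by
    set v := V2.map PowerSeries.constantCoeff with hv
    have hvd : v.natDegree = n := by rw [hv, hV2m.natDegree_map, hV2d]
    obtain ⟨c, hc⟩ := IsAlgClosed.exists_root v (by
      intro h
      have := Polynomial.natDegree_eq_zero_iff_degree_le_zero.2 h.le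
      omega)
    refine hasRoot_step (fun m hm hm0 => ih m hm hm0) V2 hV2m hV2d c hc ?_
    intro hpow
    have hn1 : n - 1 < n := by omega
    have hcn : v.coeff (n-1) = 0 := by
      rw [hv, Polynomial.coeff_map, hV2c _ hn1]
      have := hb (n-1) hn1
      rw [hcoeff, map_zero] at this
      rcases mul_eq_zero.1 this.symm with h | h
      · rw [h, map_zero]
      · exact absurd h (pow_ne_zero _ (pow_ne_zero _ PowerSeries.X_ne_zero))
    have hc0 : c = 0 := by
      rw [← hv] at hpow
      rw [hpow, sub_eq_add_neg, ← Polynomial.C_neg, Polynomial.coeff_X_add_C_pow] at hcn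
      have h1 : n - (n - 1) = 1 := by omega
      have h2 : n.choose (n-1) = n := by
        rw [← Nat.choose_symm (by omega), h1, Nat.choose_one_right]
      rw [h1, h2] at hcn
      simpa [hnC] using hcn
    have hb0 : PowerSeries.constantCoeff (b i₀) = 0 := by
      rw [← hV2c i₀ hi₀, ← Polynomial.coeff_map, hpow, hc0]
      simp [Polynomial.coeff_X_pow, hi₀.ne]
    have := congrArg PowerSeries.order (hb i₀ hi₀)
    have hco : (psi q hq0 (V.coeff i₀)).order = (q * p : ℕ) := by
      have h1 : (psi q hq0 (V.coeff i₀)).order = q • (V.coeff i₀).order := PowerSeries.order_expand q hq0 _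
      rw [h1, ← ENat.natCast_toNat (PowerSeries.order_eq_top.not.2 hne), ← hp]
      simp
    rw [hco, PowerSeries.order_mul, ← pow_mul, PowerSeries.order_X_pow] at this
    rw [mul_comm q p] at this
    have h5 : (b i₀).order = 0 := by
      have h6 : ((p * q : ℕ) : ℕ∞) ≠ ⊤ := ENat.natCast_ne_top _
      have h7 : 0 + ((p * q : ℕ) : ℕ∞) = (b i₀).order + ((p * q : ℕ) : ℕ∞) := by
        rw [zero_add]; exact this
      exact ((ENat.add_left_injective_of_ne_top h6) h7).symm
    exact PowerSeries.order_ne_zero_iff_constCoeff_eq_zero.2 hb0 h5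
  obtain ⟨N, hN, ρ, hρ⟩ := hV2root
  refine ⟨N * q, mul_ne_zero hN hq0, psi N hN (PowerSeries.X ^ p) * ρ, ?_⟩
  have h1 := Polynomial.scaleRoots_eval₂_eq_zero (p := V2) (psi N hN) (s := PowerSeries.X ^ p) hρ
  rw [← hscale, Polynomial.eval₂_map] at h1
  have h2 : (psi N hN).comp (psi q hq0) = psi (N * q) (mul_ne_zero hN hq0) := by
    ext1 a
    exact psi_mul N q hN hq0 a
  rwa [h2] at h1

end MF

namespace MF

theorem psi_inj (N : ℕ) (hN : N ≠ 0) : Function.Injective (psi N hN) := expand_inj N hN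

theorem rescale_psi {N : ℕ} (hN : N ≠ 0) {z : ℂ} (hz : z ^ N = 1) (a : A) :
    PowerSeries.rescale z (psi N hN a) = psi N hN a := by
  ext n
  rw [PowerSeries.coeff_rescale]
  by_cases h : N ∣ n
  · obtain ⟨k, rfl⟩ := h
    rw [pow_mul, hz, one_pow, one_mul]
  · have : PowerSeries.coeff n (psi N hN a) = 0 := PowerSeries.coeff_expand_of_not_dvd N hN _ h
    rw [this, mul_zero]

theorem exists_psi {N : ℕ} (hN : N ≠ 0) {z : ℂ} (hz : IsPrimitiveRoot z N) {c : A}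
    (h : PowerSeries.rescale z c = c) : ∃ a, psi N hN a = c := by
  refine ⟨PowerSeries.mk (fun n => PowerSeries.coeff (N * n) c), ?_⟩
  ext n
  by_cases hd : N ∣ n
  · obtain ⟨k, rfl⟩ := hd
    have := PowerSeries.coeff_expand_mul N hN (PowerSeries.mk (fun n => PowerSeries.coeff (N * n) c)) k
    rw [PowerSeries.coeff_mk] at this
    exact this
  · have h1 : PowerSeries.coeff n (psi N hN (PowerSeries.mk (fun n => PowerSeries.coeff (N * n) c))) = 0 :=
      PowerSeries.coeff_expand_of_not_dvd N hN _ hd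
    rw [h1]
    have h2 := congrArg (PowerSeries.coeff n) h
    rw [PowerSeries.coeff_rescale] at h2
    by_contra h3
    have h4 : z ^ n = 1 := mul_right_cancel₀ (Ne.symm h3) (by rw [h2, one_mul])
    exact hd (hz.dvd_of_pow_eq_one n h4)

/-- conjugates -/
noncomputable abbrev cj (z : ℂ) (ρ : A) (j : ℕ) : A := PowerSeries.rescale (z ^ j) ρ

theorem cj_root {N : ℕ} (hN : N ≠ 0) {z : ℂ} (hz : IsPrimitiveRoot z N) {ρ : A}
    (P : Polynomial A) (j : ℕ) :
    Polynomial.eval₂ (psi N hN) (cj z ρ j) P = cj z (Polynomial.eval₂ (psi N hN) ρ P) j := by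
  rw [cj, cj, Polynomial.hom_eval₂]
  congr 1
  ext1 a
  symm
  apply rescale_psi
  rw [← pow_mul, mul_comm, pow_mul, hz.pow_eq_one, one_pow]

theorem cj_inj {N : ℕ} (hN : N ≠ 0) {z : ℂ} (hz : IsPrimitiveRoot z N) {ρ : A} {V : Polynomial A}
    (hroot : Polynomial.eval₂ (psi N hN) ρ V = 0)
    (hmin : ∀ M (hM : M ≠ 0), M < N → ∀ σ, Polynomial.eval₂ (psi M hM) σ V ≠ 0) :
    Function.Injective (fun j : Fin N => cj z ρ j) := by
  have key : ∀ j k : ℕ, j < k → k < N → cj z ρ j = cj z ρ k → False := by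
    intro j k hjk hk h
    set w := z ^ (k - j) with hw
    have hw1 : w ≠ 1 := by
      intro h1
      have := Nat.le_of_dvd (by omega) (hz.dvd_of_pow_eq_one _ h1)
      omega
    have hwN : w ^ N = 1 := by rw [hw, ← pow_mul, mul_comm, pow_mul, hz.pow_eq_one, one_pow]
    have hfix : PowerSeries.rescale w ρ = ρ := by
      ext n
      have h2 := congrArg (PowerSeries.coeff n) h
      rw [PowerSeries.coeff_rescale, PowerSeries.coeff_rescale] at h2
      rw [PowerSeries.coeff_rescale]
      have hz0 : (z ^ j) ^ n ≠ 0 := pow_ne_zero _ (pow_ne_zero _ (hz.ne_zero hN))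
      apply mul_left_cancel₀ hz0
      rw [h2, ← mul_assoc, ← mul_pow, hw, ← pow_add]
      congr 4
      omega
    have hd0 : orderOf w ≠ 0 := by
      rw [Ne, orderOf_eq_zero_iff, not_not]
      exact isOfFinOrder_iff_pow_eq_one.2 ⟨N, Nat.pos_of_ne_zero hN, hwN⟩
    obtain ⟨σ, hσ⟩ := exists_psi hd0 (IsPrimitiveRoot.orderOf w) hfix
    obtain ⟨M, hM⟩ := orderOf_dvd_of_pow_eq_one hwN
    have hM0 : M ≠ 0 := by rintro rfl; omega
    have hMN : M < N := by
      have : orderOf w ≠ 1 := by rwa [Ne, orderOf_eq_one_iff]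
      rw [hM]
      have : 2 ≤ orderOf w := by omega
      nlinarith [Nat.pos_of_ne_zero hM0]
    apply hmin M hM0 hMN σ
    apply psi_inj _ hd0
    rw [map_zero, Polynomial.hom_eval₂, hσ, ← hroot]
    congr 1
    ext1 a
    subst hM
    exact psi_mul _ M hd0 hM0 a
  intro j k h
  simp only at h
  rcases lt_trichotomy j k with h1 | h1 | h1
  · exact (key j k h1 k.2 h).elim
  · exact h1
  · exact (key k j h1 j.2 h.symm).elim

theorem prod_dvd_of_roots {n : ℕ} (σ : Fin n → A) (hσ : Function.Injective σ) (P : Polynomial A)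
    (h : ∀ j, P.eval (σ j) = 0) : ∏ j, (Polynomial.X - Polynomial.C (σ j)) ∣ P := by
  classical
  by_cases hP : P = 0
  · rw [hP]; exact dvd_zero _
  have h1 : (Finset.univ.val.map σ) ≤ P.roots := by
    rw [Multiset.le_iff_subset ((Multiset.nodup_map_iff_of_injective hσ).2 Finset.univ.nodup)]
    intro x hx
    obtain ⟨j, _, rfl⟩ := Multiset.mem_map.1 hx
    exact (Polynomial.mem_roots hP).2 (h j)
  have h2 := (Multiset.prod_X_sub_C_dvd_iff_le_roots hP _).2 h1
  rwa [Multiset.map_map] at h2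

theorem puiseux (V : Polynomial A) (hV : V.Monic) (hirr : Irreducible V) (he : V.natDegree ≠ 0) :
    ∃ (z : ℂ) (ρ : A), IsPrimitiveRoot z V.natDegree ∧
      Function.Injective (fun j : Fin V.natDegree => cj z ρ j) ∧
      V.map (psi V.natDegree he) =
        ∏ j : Fin V.natDegree, (Polynomial.X - Polynomial.C (cj z ρ j)) := by
  classical
  have hex : ∃ N, ∃ (hN : N ≠ 0), ∃ ρ, Polynomial.eval₂ (psi N hN) ρ V = 0 := 
    hasRoot V.natDegree (Nat.pos_of_ne_zero he) V hV rfl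
  have hmin := fun M => Nat.find_min hex (m := M)
  obtain ⟨hN, ρ, hρ⟩ := Nat.find_spec hex
  set N := Nat.find hex
  obtain ⟨z, hz⟩ : ∃ z : ℂ, IsPrimitiveRoot z N := ⟨_, Complex.isPrimitiveRoot_exp N hN⟩
  have hinj := cj_inj hN hz hρ (fun M hM hlt σ h => hmin M hlt ⟨hM, σ, h⟩)
  have hroot : ∀ j : Fin N, (V.map (psi N hN)).eval (cj z ρ j) = 0 := by
    intro j
    rw [Polynomial.eval_map, cj_root hN hz, hρ, cj, map_zero]
  have hdvd := prod_dvd_of_roots _ hinj _ hroot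
  set Q := ∏ j : Fin N, (Polynomial.X - Polynomial.C (cj z ρ j)) with hQ
  have hQm : Q.Monic := Polynomial.monic_prod_of_monic _ _ (fun j _ => Polynomial.monic_X_sub_C _)
  have hQd : Q.natDegree = N := by
    rw [hQ, Polynomial.natDegree_prod_of_monic _ _ (fun j _ => Polynomial.monic_X_sub_C _)]
    simp
  have hQfix : Q.map (PowerSeries.rescale z) = Q := by
    rw [hQ, Polynomial.map_prod]
    have : ∀ j : Fin N, (Polynomial.X - Polynomial.C (cj z ρ j)).map (PowerSeries.rescale z) =
        Polynomial.X - Polynomial.C (cj z ρ (j+1)) := by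
      intro j
      simp only [Polynomial.map_sub, Polynomial.map_X, Polynomial.map_C, cj,
        PowerSeries.rescale_rescale, pow_succ]
    simp only [this]
    rw [Fin.prod_univ_eq_prod_range (fun j => Polynomial.X - Polynomial.C (cj z ρ (j+1))) N,
      Fin.prod_univ_eq_prod_range (fun j => Polynomial.X - Polynomial.C (cj z ρ j)) N]
    obtain ⟨k, hk⟩ : ∃ k, N = k + 1 := ⟨N - 1, by omega⟩
    rw [hk, Finset.prod_range_succ, Finset.prod_range_succ', ← hk]
    congr 3
    rw [cj, cj, hz.pow_eq_one, pow_zero]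
  have hQ0 : ∃ Q0 : Polynomial A, Q0.map (psi N hN) = Q := by
    have : ∀ i, ∃ a, psi N hN a = Q.coeff i := by
      intro i
      apply exists_psi hN hz
      rw [← Polynomial.coeff_map, hQfix]
    rw [← Polynomial.mem_lifts, Polynomial.lifts_iff_coeff_lifts]
    intro i
    obtain ⟨a, ha⟩ := this i
    exact ⟨a, ha⟩
  obtain ⟨Q0, hQ0⟩ := hQ0
  have hQ0m : Q0.Monic := by
    apply Polynomial.monic_of_injective (psi_inj N hN)
    rw [hQ0]; exact hQm
  have hQ0d : Q0.natDegree = N := by rw [← hQ0m.natDegree_map (psi N hN), hQ0, hQd]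
  have hQV : Q0 ∣ V := by
    rwa [← hQ0, Polynomial.map_dvd_map _ (psi_inj N hN) hQ0m] at hdvd
  have hass : Associated Q0 V := by
    rcases (hirr.dvd_iff.1 hQV) with h | h
    · rw [hQ0m.isUnit_iff.1 h, Polynomial.natDegree_one] at hQ0d
      exact absurd hQ0d.symm hN
    · exact h.symm
  have hQV : Q0 = V := Polynomial.eq_of_monic_of_associated hQ0m hV hass
  have hNe : N = V.natDegree := by rw [← hQV, hQ0d]
  clear_value N
  subst hNe
  refine ⟨z, ρ, hz, hinj, ?_⟩
  rw [← hQ, ← hQ0, hQV]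

end MF

namespace MF

/-! ### Derivations -/

/-- derivative with respect to `x`, coefficientwise -/
noncomputable def dx : Derivation ℂ (Polynomial A) (Polynomial A) :=
  (PolynomialModule.equivPolynomialSelf (R := A)).toLinearMap.compDer
    (Derivation.mapCoeffs (PowerSeries.derivative ℂ))

theorem dx_monomial (n : ℕ) (a : A) :
    dx (Polynomial.monomial n a) = Polynomial.monomial n (PowerSeries.derivative ℂ a) := by
  change PolynomialModule.equivPolynomialSelf
    (Derivation.mapCoeffs _ (Polynomial.monomial n a)) = _
  rw [Derivation.mapCoeffs_monomial]
  simp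

theorem dx_C (a : A) : dx (Polynomial.C a) = Polynomial.C (PowerSeries.derivative ℂ a) := by
  rw [← Polynomial.monomial_zero_left, dx_monomial, Polynomial.monomial_zero_left]

theorem dx_X : dx (Polynomial.X : Polynomial A) = 0 := by
  rw [← Polynomial.monomial_one_one_eq_X, dx_monomial]
  simp

theorem deriv_psi {e : ℕ} (he : e ≠ 0) (a : A) :
    PowerSeries.derivative ℂ (psi e he a) =
      psi e he (PowerSeries.derivative ℂ a) * ((e : A) * PowerSeries.X ^ (e - 1)) := by
  have h : ∀ b : A, psi e he b = PowerSeries.expand e he b := fun _ => rfl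
  ext n
  rw [PowerSeries.coeff_derivative, mul_left_comm, ← map_natCast PowerSeries.C,
    PowerSeries.coeff_C_mul, PowerSeries.coeff_mul_X_pow', h, h]
  by_cases hd : e ∣ n + 1
  · obtain ⟨k, hk⟩ := hd
    have hk0 : k ≠ 0 := by rintro rfl; omega
    obtain ⟨k, rfl⟩ : ∃ l, k = l + 1 := ⟨k - 1, by omega⟩
    have h2 : n - (e - 1) = e * k := by rw [mul_add, mul_one] at hk; omega
    have h3 : e - 1 ≤ n := by rw [mul_add, mul_one] at hk; omega
    rw [if_pos h3, h2, hk, PowerSeries.coeff_expand_mul, PowerSeries.coeff_expand_mul,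
      PowerSeries.coeff_derivative]
    have h4 : (n : ℂ) + 1 = e * (k + 1) := by exact_mod_cast hk
    rw [h4]; ring
  · rw [PowerSeries.coeff_expand_of_not_dvd e he _ hd, zero_mul]
    split_ifs with h3
    · rw [PowerSeries.coeff_expand_of_not_dvd, mul_zero]
      intro h5
      apply hd
      have : n + 1 = (n - (e - 1)) + e := by omega
      rw [this]
      exact dvd_add h5 (dvd_refl _)
    · rw [mul_zero]

theorem chain_rule {e : ℕ} (he : e ≠ 0) (ρ : A) (P : Polynomial A) :
    PowerSeries.derivative ℂ (Polynomial.eval₂ (psi e he) ρ P) =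
      Polynomial.eval₂ (psi e he) ρ (dx P) * ((e : A) * PowerSeries.X ^ (e - 1)) +
      Polynomial.eval₂ (psi e he) ρ (Polynomial.derivative P) * PowerSeries.derivative ℂ ρ := by
  induction P using Polynomial.induction_on' with
  | add p q hp hq =>
    simp only [Polynomial.eval₂_add, map_add, hp, hq]; ring
  | monomial n a =>
    rw [dx_monomial, Polynomial.derivative_monomial, Polynomial.eval₂_monomial,
      Polynomial.eval₂_monomial, Polynomial.eval₂_monomial, Derivation.leibniz,
      Derivation.leibniz_pow, deriv_psi]
    simp only [smul_eq_mul, nsmul_eq_mul, map_mul, map_natCast]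
    ring

/-! ### Branches -/

/-- A branch -/
structure Br (V : Polynomial A) where
  dist : Dist V
  he : V.natDegree ≠ 0
  z : ℂ
  ρ : A
  hz : IsPrimitiveRoot z V.natDegree
  hinj : Function.Injective (fun j : Fin V.natDegree => cj z ρ j)
  hsplit : V.map (psi V.natDegree he) =
        ∏ j : Fin V.natDegree, (Polynomial.X - Polynomial.C (cj z ρ j))
  ev : T →ₐ[ℂ] A
  hev : ∀ P : Polynomial A, ev (P : T) = Polynomial.eval₂ (psi V.natDegree he) ρ P

theorem exists_branch {V : Polynomial A} (hD : Dist V) (hirr : Irreducible V) : Nonempty (Br V) := by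
  have he : V.natDegree ≠ 0 := by
    intro h
    have := Polynomial.eq_one_of_monic_natDegree_zero hD.1 h
    rw [this] at hirr
    exact hirr.not_isUnit isUnit_one
  obtain ⟨z, ρ, hz, hinj, hs⟩ := puiseux V hD.1 hirr he
  have hroot : Polynomial.eval₂ (psi V.natDegree he) ρ V = 0 := by
    rw [← Polynomial.eval_map, hs, Polynomial.eval_prod]
    apply Finset.prod_eq_zero (Finset.mem_univ (⟨0, Nat.pos_of_ne_zero he⟩ : Fin V.natDegree))
    simp [cj, PowerSeries.rescale_one]
  let m : (Polynomial A ⧸ Ideal.span {V}) →+* (T ⧸ Ideal.span {(V : T)}) :=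
    Ideal.quotientMap (I := Ideal.span {V}) (Ideal.span {(V : T)}) Polynomial.coeToPowerSeries.ringHom (by
      rw [Ideal.span_le]
      rintro _ rfl
      exact Ideal.mem_span_singleton_self _)
  have hm : ∀ P : Polynomial A, m (Ideal.Quotient.mk _ P) = Ideal.Quotient.mk _ (P : T) := by
    intro P
    rfl
  have hbij : Function.Bijective m := by
    constructor
    · rw [injective_iff_map_eq_zero]
      intro a
      obtain ⟨P, rfl⟩ := Ideal.Quotient.mk_surjective a
      rw [hm, Ideal.Quotient.eq_zero_iff_mem, Ideal.Quotient.eq_zero_iff_mem,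
        Ideal.mem_span_singleton, Ideal.mem_span_singleton]
      exact hD.dvd
    · intro a
      obtain ⟨G, rfl⟩ := Ideal.Quotient.mk_surjective a
      obtain ⟨q, r, hr, rfl⟩ := hD.div G
      refine ⟨Ideal.Quotient.mk _ r, ?_⟩
      rw [hm, map_add, map_mul, Ideal.Quotient.eq_zero_iff_mem.2 (Ideal.mem_span_singleton_self _),
        zero_mul, zero_add]
  let E := RingEquiv.ofBijective m hbij
  let l : (Polynomial A ⧸ Ideal.span {V}) →+* A :=
    Ideal.Quotient.lift (Ideal.span {V}) (Polynomial.eval₂RingHom (psi V.natDegree he) ρ) (by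
      intro a ha
      obtain ⟨b, rfl⟩ := Ideal.mem_span_singleton.1 ha
      rw [map_mul, Polynomial.coe_eval₂RingHom, hroot, zero_mul])
  let ev0 : T →+* A := (l.comp E.symm.toRingHom).comp (Ideal.Quotient.mk _)
  have hev0 : ∀ P : Polynomial A, ev0 (P : T) = Polynomial.eval₂ (psi V.natDegree he) ρ P := by
    intro P
    have : E.symm (Ideal.Quotient.mk _ (P : T)) = Ideal.Quotient.mk _ P := by
      rw [RingEquiv.symm_apply_eq]
      rfl
    change l (E.symm (Ideal.Quotient.mk _ (P : T))) = _
    rw [this]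
    rfl
  refine ⟨⟨hD, he, z, ρ, hz, hinj, hs, { ev0 with commutes' := ?_ }, hev0⟩⟩
  intro r
  have : algebraMap ℂ T r = ((Polynomial.C (PowerSeries.C r) : Polynomial A) : T) := by
    rw [Polynomial.coe_C, MvPowerSeries.algebraMap_apply]; rfl
  change ev0 _ = _
  rw [this, hev0, Polynomial.eval₂_C]
  exact PowerSeries.expand_C _ _ r

namespace Br
variable {V : Polynomial A} (B : Br V)

theorem ev_V : B.ev (V : T) = 0 := by
  rw [B.hev, ← Polynomial.eval_map, B.hsplit, Polynomial.eval_prod]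
  apply Finset.prod_eq_zero (Finset.mem_univ (⟨0, Nat.pos_of_ne_zero B.he⟩ : Fin V.natDegree))
  simp [cj, PowerSeries.rescale_one]

theorem ker (G : T) : B.ev G = 0 ↔ (V : T) ∣ G := by
  constructor
  · intro h
    obtain ⟨q, r, hr, rfl⟩ := B.dist.div G
    rw [map_add, map_mul, B.ev_V, zero_mul, zero_add, B.hev] at h
    have h1 : (V.map (psi V.natDegree B.he)) ∣ (r.map (psi V.natDegree B.he)) := by
      rw [B.hsplit]
      apply prod_dvd_of_roots _ B.hinj
      intro j
      rw [Polynomial.eval_map, cj_root B.he B.hz, h, cj, map_zero]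
    rw [Polynomial.map_dvd_map _ (psi_inj _ _) B.dist.1] at h1
    have h2 : r = 0 := by
      apply Polynomial.eq_zero_of_dvd_of_degree_lt h1
      rwa [Polynomial.degree_eq_natDegree B.dist.1.ne_zero]
    rw [h2, Polynomial.coe_zero, add_zero]
    exact dvd_mul_right _ _
  · rintro ⟨q, rfl⟩
    rw [map_mul, B.ev_V, zero_mul]


theorem prime (B : Br V) : Prime (V : T) := by
  have hne : (V : T) ≠ 0 := by
    intro h
    exact B.dist.1.ne_zero (Polynomial.coe_eq_zero_iff.1 h)
  refine ⟨hne, ?_, ?_⟩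
  · intro h
    have := h.map B.ev
    rw [B.ev_V] at this
    exact not_isUnit_zero this
  · intro a b h
    rw [← B.ker, map_mul, mul_eq_zero] at h
    rwa [← B.ker, ← B.ker]

/-- delta invariant of the branch -/
noncomputable def delta : ℕ∞ := cod (LinearMap.range B.ev.toLinearMap)

/-- the matrix of powers of `ρ` -/
noncomputable def mat : Matrix (Fin V.natDegree) (Fin V.natDegree) A :=
  fun i j => (dec V.natDegree B.he).symm (B.ρ ^ (j : ℕ)) i

theorem pow_eq (j : Fin V.natDegree) :
    B.ρ ^ (j : ℕ) = ∑ i, psi V.natDegree B.he (B.mat i j) * PowerSeries.X ^ (i : ℕ) := by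
  conv_lhs => rw [← (dec V.natDegree B.he).apply_symm_apply (B.ρ ^ (j : ℕ))]
  rw [dec_apply]
  rfl

theorem vand : Matrix.vandermonde (fun j : Fin V.natDegree => cj B.z B.ρ j) =
    Matrix.vandermonde (fun j : Fin V.natDegree => cj B.z PowerSeries.X j) *
      B.mat.map (psi V.natDegree B.he) := by
  ext1 k j
  rw [Matrix.vandermonde_apply, Matrix.mul_apply]
  have h := congrArg (PowerSeries.rescale (B.z ^ (k : ℕ))) (B.pow_eq j)
  rw [map_pow, map_sum] at h
  rw [cj, h]
  refine Finset.sum_congr rfl (fun i _ => ?_)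
  rw [map_mul, map_pow, rescale_psi, Matrix.vandermonde_apply, Matrix.map_apply, mul_comm]
  rw [← pow_mul, mul_comm, pow_mul, B.hz.pow_eq_one, one_pow]

theorem det_eq : (Matrix.vandermonde (fun j : Fin V.natDegree => cj B.z B.ρ j)).det =
    (Matrix.vandermonde (fun j : Fin V.natDegree => cj B.z PowerSeries.X j)).det *
      psi V.natDegree B.he B.mat.det := by
  rw [B.vand, Matrix.det_mul, ← RingHom.mapMatrix_apply, ← RingHom.map_det]

theorem det_ne : B.mat.det ≠ 0 := by
  have h := Matrix.det_vandermonde_ne_zero_iff.2 B.hinj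
  rw [B.det_eq] at h
  intro h0
  rw [h0, map_zero, mul_zero] at h
  exact h rfl

theorem range_eq : LinearMap.range B.ev.toLinearMap =
    ((LinearMap.range (Matrix.toLin' B.mat)).restrictScalars ℂ).map
      (dec V.natDegree B.he).toLinearMap := by
  have key : ∀ v : Fin V.natDegree → A, dec V.natDegree B.he (Matrix.toLin' B.mat v) =
      ∑ j : Fin V.natDegree, psi V.natDegree B.he (v j) * B.ρ ^ (j : ℕ) := by
    intro v
    rw [dec_apply]
    simp only [Matrix.toLin'_apply, Matrix.mulVec, dotProduct, map_sum, Finset.sum_mul, B.pow_eq,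
      Finset.mul_sum]
    rw [Finset.sum_comm]
    refine Finset.sum_congr rfl (fun i _ => Finset.sum_congr rfl (fun j _ => ?_))
    rw [map_mul]
    change PowerSeries.expand _ _ _ * _ * _ = PowerSeries.expand _ _ _ * (PowerSeries.expand _ _ _ * _)
    ring
  ext c
  simp only [LinearMap.mem_range, Submodule.mem_map, Submodule.restrictScalars_mem]
  constructor
  · rintro ⟨G, rfl⟩
    obtain ⟨q, r, hr, rfl⟩ := B.dist.div G
    refine ⟨_, ⟨fun j => r.coeff j, rfl⟩, ?_⟩
    change dec V.natDegree B.he _ = B.ev _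
    rw [key, map_add, map_mul, B.ev_V, zero_mul, zero_add, B.hev]
    rw [Fin.sum_univ_eq_sum_range (fun j => psi V.natDegree B.he (r.coeff j) * B.ρ ^ j)]
    by_cases hr0 : r = 0
    · simp [hr0]
    · rw [Polynomial.eval₂_eq_sum_range' _ ((Polynomial.natDegree_lt_iff_degree_lt hr0).2 hr)]
  · rintro ⟨_, ⟨v, rfl⟩, rfl⟩
    refine ⟨((∑ j : Fin V.natDegree, Polynomial.C (v j) * Polynomial.X ^ (j : ℕ) : Polynomial A) : T), ?_⟩
    change B.ev _ = dec V.natDegree B.he _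
    rw [key, B.hev, Polynomial.eval₂_finsetSum]
    simp

theorem delta_eq : B.delta = B.mat.det.order := by
  rw [delta, B.range_eq, cod_map _ (dec V.natDegree B.he).injective, cod_det _ B.det_ne,
    LinearMap.range_eq_top.2 (dec V.natDegree B.he).surjective, cod_top, add_zero]

theorem delta_ne_top : B.delta ≠ ⊤ := by
  rw [delta_eq]
  exact PowerSeries.order_eq_top.not.2 B.det_ne

end Br

theorem order_rescale {a : ℂ} (ha : a ≠ 0) (c : A) : (PowerSeries.rescale a c).order = c.order := by
  have key : ∀ (a : ℂ) (c : A), c.order ≤ (PowerSeries.rescale a c).order := by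
    intro a c
    apply PowerSeries.le_order
    intro i hi
    rw [PowerSeries.coeff_rescale, PowerSeries.coeff_of_lt_order i hi, mul_zero]
  apply le_antisymm _ (key a c)
  refine le_trans (key a⁻¹ _) ?_
  rw [PowerSeries.rescale_rescale, mul_inv_cancel₀ ha, PowerSeries.rescale_one]
  rfl

theorem order_vandermonde {n : ℕ} (v : Fin n → A) :
    2 * (Matrix.vandermonde v).det.order =
      ∑ i, ∑ j ∈ Finset.univ.erase i, (v i - v j).order := by
  rw [Matrix.det_vandermonde, order_finprod, two_mul]
  simp only [order_finprod]
  have h1 : ∀ i : Fin n, Finset.univ.erase i = Finset.Iio i ∪ Finset.Ioi i := by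
    intro i; ext j; simp
  have h2 : ∀ i : Fin n, ∑ j ∈ Finset.univ.erase i, (v i - v j).order =
      ∑ j ∈ Finset.Iio i, (v i - v j).order + ∑ j ∈ Finset.Ioi i, (v j - v i).order := by
    intro i
    rw [h1, Finset.sum_union]
    · congr 1
      refine Finset.sum_congr rfl (fun j _ => ?_)
      rw [← PowerSeries.order_neg, neg_sub]
    · rw [Finset.disjoint_left]
      intro j hj hj'
      simp only [Finset.mem_Iio, Finset.mem_Ioi] at hj hj'
      exact lt_asymm hj hj'
  simp only [h2, Finset.sum_add_distrib]
  congr 1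
  rw [Finset.sum_comm' (t' := Finset.univ) (s' := fun j => Finset.Iio j)]
  intro i j; simp

namespace Br
variable {V : Polynomial A} (B : Br V)

theorem eval_deriv (i : Fin V.natDegree) :
    Polynomial.eval₂ (psi V.natDegree B.he) (cj B.z B.ρ i) (Polynomial.derivative V) =
      ∏ j ∈ Finset.univ.erase i, (cj B.z B.ρ i - cj B.z B.ρ j) := by
  rw [← Polynomial.eval_map, ← Polynomial.derivative_map, B.hsplit,
    ← Finset.mul_prod_erase _ _ (Finset.mem_univ i), Polynomial.derivative_mul]
  simp [Polynomial.eval_prod]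

theorem main : (B.ev ((Polynomial.derivative V : Polynomial A) : T)).order + 1 =
    2 * B.delta + V.natDegree := by
  set e := V.natDegree with hedef
  have h1 := order_vandermonde (fun j : Fin V.natDegree => cj B.z B.ρ j)
  have h2 := order_vandermonde (fun j : Fin V.natDegree => cj B.z PowerSeries.X j)
  have h3 : ∀ i : Fin V.natDegree, ∑ j ∈ Finset.univ.erase i, (cj B.z B.ρ i - cj B.z B.ρ j).order =
      (B.ev ((Polynomial.derivative V : Polynomial A) : T)).order := by
    intro i
    rw [← order_finprod, ← B.eval_deriv, cj_root B.he B.hz, B.hev, cj, order_rescale]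
    exact pow_ne_zero _ (B.hz.ne_zero B.he)
  have h4 : ∀ i : Fin V.natDegree, ∑ j ∈ Finset.univ.erase i,
      (cj B.z PowerSeries.X i - cj B.z PowerSeries.X j).order = ((e - 1 : ℕ) : ℕ∞) := by
    intro i
    rw [Finset.sum_congr rfl (g := fun _ => (1 : ℕ∞))]
    · simp [← hedef]
    · intro j hj
      rw [cj, cj, PowerSeries.rescale_X, PowerSeries.rescale_X, ← sub_mul, ← map_sub,
        PowerSeries.order_mul, PowerSeries.order_X]
      have : (PowerSeries.C (B.z ^ (i : ℕ) - B.z ^ (j : ℕ)) : A).order = 0 := by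
        by_contra hcon
        rw [← ne_eq, PowerSeries.order_ne_zero_iff_constCoeff_eq_zero, PowerSeries.constantCoeff_C,
          sub_eq_zero] at hcon
        exact Finset.ne_of_mem_erase hj (Fin.ext (B.hz.pow_inj j.2 i.2 hcon.symm))
      rw [this, zero_add]
  simp only [h3, h4] at h1 h2
  rw [B.det_eq, PowerSeries.order_mul, mul_add, h2] at h1
  have h5 : (psi V.natDegree B.he B.mat.det).order = V.natDegree • B.mat.det.order :=
    PowerSeries.order_expand _ _ _
  rw [h5, ← B.delta_eq] at h1
  simp only [Finset.sum_const, Finset.card_univ, Fintype.card_fin, nsmul_eq_mul, ← hedef] at h1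
  have he0 : (e : ℕ∞) ≠ 0 := by exact_mod_cast B.he
  have h6 : (e : ℕ∞) * (((e - 1 : ℕ) : ℕ∞) + 2 * B.delta) =
      e * (B.ev ((Polynomial.derivative V : Polynomial A) : T)).order := by
    rw [← h1]; ring
  have h7 := (ENat.mul_right_strictMono he0 (ENat.natCast_ne_top e)).injective h6
  rw [← h7]
  have h8 : (e : ℕ∞) = ((e - 1 : ℕ) : ℕ∞) + 1 := by
    have := B.he
    exact_mod_cast (by omega : e = e - 1 + 1)
  rw [h8, ENat.natCast_sub]
  simp
  ring

theorem cod_mul (c : A) (hc : c ≠ 0) :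
    cod ((LinearMap.range B.ev.toLinearMap).map (LinearMap.mulLeft ℂ c)) = c.order + B.delta := by
  rw [cod_map _ (mul_right_injective₀ hc), add_comm, delta]
  congr 1
  rw [← icod_order]
  unfold icod
  congr 1
  ext x
  simp [Ideal.mem_span_singleton, dvd_def, eq_comm]

theorem icod_pair {G : T} (hG : ¬ (V : T) ∣ G) :
    icod (Ideal.span {(V : T), G}) = (B.ev G).order := by
  have hc : B.ev G ≠ 0 := (B.ker G).not.2 hG
  have h := cod_add B.ev.toLinearMap
    ((LinearMap.range B.ev.toLinearMap).map (LinearMap.mulLeft ℂ (B.ev G)))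
  rw [B.cod_mul _ hc, sup_eq_right.2] at h
  · rw [← delta] at h
    have := (ENat.add_left_injective_of_ne_top B.delta_ne_top) h
    rw [this]
    unfold icod
    congr 1
    ext t
    simp only [Submodule.restrictScalars_mem, Ideal.mem_span_pair, Submodule.mem_comap,
      Submodule.mem_map, LinearMap.mem_range, AlgHom.toLinearMap_apply, LinearMap.mulLeft_apply,
      exists_exists_eq_and]
    constructor
    · rintro ⟨a, b, rfl⟩
      refine ⟨b, ?_⟩
      rw [map_add, map_mul, map_mul, B.ev_V]; ring
    · rintro ⟨b, hb⟩
      rw [← map_mul, ← sub_eq_zero, ← map_sub, B.ker] at hb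
      obtain ⟨a, ha⟩ := hb
      exact ⟨-a, b, by linear_combination ha⟩
  · rintro _ ⟨_, ⟨q, rfl⟩, rfl⟩
    exact ⟨G * q, by simp⟩

end Br

end MF

namespace MF

/-! ### Factoring distinguished polynomials -/

theorem dist_iff_map {W : Polynomial A} (hW : W.Monic) :
    Dist W ↔ W.map PowerSeries.constantCoeff = Polynomial.X ^ W.natDegree := by
  constructor
  · intro h
    ext i
    rw [Polynomial.coeff_map, Polynomial.coeff_X_pow]
    rcases lt_trichotomy i W.natDegree with hi | hi | hi
    · rw [h.2 i hi, if_neg hi.ne]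
    · rw [hi, if_pos rfl, hW.coeff_natDegree, map_one]
    · rw [Polynomial.coeff_eq_zero_of_natDegree_lt hi, map_zero, if_neg hi.ne']
  · intro h
    refine ⟨hW, fun i hi => ?_⟩
    rw [← Polynomial.coeff_map, h, Polynomial.coeff_X_pow, if_neg hi.ne]

theorem Dist.of_mul {P Q : Polynomial A} (hP : P.Monic) (hQ : Q.Monic) (h : Dist (P * Q)) : Dist P := by
  rw [dist_iff_map hP]
  rw [dist_iff_map (hP.mul hQ), Polynomial.map_mul] at h
  have h1 : P.map PowerSeries.constantCoeff ∣ Polynomial.X ^ (P * Q).natDegree := ⟨_, h.symm⟩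
  rw [dvd_prime_pow Polynomial.prime_X] at h1
  obtain ⟨i, -, hi⟩ := h1
  have h2 := Polynomial.eq_of_monic_of_associated (hP.map _) (Polynomial.monic_X_pow i) hi
  have h3 := congrArg Polynomial.natDegree h2
  rw [hP.natDegree_map, Polynomial.natDegree_X_pow] at h3
  rw [h2, h3]

theorem Dist.of_mul_right {P Q : Polynomial A} (hP : P.Monic) (hQ : Q.Monic) (h : Dist (P * Q)) :
    Dist Q := by
  rw [mul_comm] at h
  exact Dist.of_mul hQ hP h

theorem Dist.induct {motive : Polynomial A → Prop} (one : motive 1)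
    (mul : ∀ V W, Dist V → Dist W → Irreducible V → motive W → motive (V * W)) :
    ∀ V, Dist V → motive V := by
  intro V
  induction hn : V.natDegree using Nat.strong_induction_on generalizing V with
  | _ n ih =>
  intro hV
  by_cases h0 : V.natDegree = 0
  · rw [Polynomial.eq_one_of_monic_natDegree_zero hV.1 h0]
    exact one
  have hnu : ¬ IsUnit V := by
    intro h
    exact h0 (Polynomial.natDegree_eq_zero_of_isUnit h)
  obtain ⟨P, hP, Q, hQ⟩ := WfDvdMonoid.exists_irreducible_factor hnu hV.1.ne_zero
  have hl : P.leadingCoeff * Q.leadingCoeff = 1 := by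
    rw [← Polynomial.leadingCoeff_mul, ← hQ]; exact hV.1
  have hl' : Polynomial.C P.leadingCoeff * Polynomial.C Q.leadingCoeff = 1 := by
    rw [← Polynomial.C_mul, hl, Polynomial.C_1]
  set P' := Polynomial.C Q.leadingCoeff * P with hP'
  set Q' := Polynomial.C P.leadingCoeff * Q with hQ'
  have hmP : P'.Monic := by
    rw [Polynomial.Monic, hP', Polynomial.leadingCoeff_mul, Polynomial.leadingCoeff_C, mul_comm, hl]
  have hmQ : Q'.Monic := by
    rw [Polynomial.Monic, hQ', Polynomial.leadingCoeff_mul, Polynomial.leadingCoeff_C, hl]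
  have hVe : V = P' * Q' := by
    rw [hQ, hP', hQ']
    linear_combination (-P * Q) * hl'
  have hirr : Irreducible P' := by
    rw [hP', irreducible_isUnit_mul]
    · exact hP
    · exact IsUnit.of_mul_eq_one (Polynomial.C P.leadingCoeff) (by rw [mul_comm]; exact hl')
  rw [hVe] at hV
  have hDP := Dist.of_mul hmP hmQ hV
  have hDQ := Dist.of_mul_right hmP hmQ hV
  rw [hVe]
  refine mul _ _ hDP hDQ hirr (ih Q'.natDegree ?_ Q' rfl hDQ)
  have h1 : P'.natDegree ≠ 0 := by
    intro h
    rw [Polynomial.eq_one_of_monic_natDegree_zero hmP h] at hirr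
    exact hirr.not_isUnit isUnit_one
  rw [← hn, hVe, hmP.natDegree_mul hmQ]
  omega

theorem ev_const (φ : T →ₐ[ℂ] A) (G : T) :
    PowerSeries.constantCoeff (φ G) = PowerSeries.constantCoeff (PowerSeries.constantCoeff G) := by
  by_contra h
  set c := PowerSeries.constantCoeff (φ G)
  have h1 : IsUnit (G - algebraMap ℂ T c) := by
    rw [PowerSeries.isUnit_iff_constantCoeff, PowerSeries.isUnit_iff_constantCoeff,
      isUnit_iff_ne_zero, map_sub, map_sub, sub_ne_zero]
    intro h2
    apply h
    rw [h2, MvPowerSeries.algebraMap_apply]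
    change c = PowerSeries.constantCoeff (PowerSeries.constantCoeff (PowerSeries.C (PowerSeries.C c)))
    rw [PowerSeries.constantCoeff_C, PowerSeries.constantCoeff_C]
  have h2 := h1.map φ
  rw [map_sub, AlgHom.commutes, PowerSeries.isUnit_iff_constantCoeff, map_sub] at h2
  have h3 : PowerSeries.constantCoeff (algebraMap ℂ A c) = c := PowerSeries.constantCoeff_C c
  rw [h3] at h2
  simp [c] at h2

/-! ### Teissier's formula -/

theorem Br.teissier_irr {V : Polynomial A} (B : Br V) {P : Polynomial A}
    (h0 : PowerSeries.constantCoeff (P.coeff 0) = 0)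
    (hd : (V : T) ∣ ((Polynomial.derivative P : Polynomial A) : T)) :
    (B.ev (P : T)).order = (B.ev (dx P : Polynomial A)).order + V.natDegree := by
  rw [← B.ker, B.hev] at hd
  have h1 := chain_rule B.he B.ρ P
  rw [hd, zero_mul, add_zero, ← B.hev, ← B.hev] at h1
  have h2 : PowerSeries.constantCoeff (B.ev (P : T)) = 0 := by
    rw [ev_const, ← PowerSeries.coeff_zero_eq_constantCoeff_apply (P : T), Polynomial.coeff_coe, h0]
  rw [order_deriv h2, h1, PowerSeries.order_mul, PowerSeries.order_mul, PowerSeries.order_X_pow]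
  have h3 : ((V.natDegree : A)).order = 0 := by
    by_contra hcon
    rw [← ne_eq, PowerSeries.order_ne_zero_iff_constCoeff_eq_zero, map_natCast,
      Nat.cast_eq_zero] at hcon
    exact B.he hcon
  rw [h3, zero_add, add_assoc]
  congr 1
  have := B.he
  exact_mod_cast (by omega : V.natDegree - 1 + 1 = V.natDegree)

theorem teissier_aux {P : Polynomial A}
    (h0 : PowerSeries.constantCoeff (P.coeff 0) = 0) :
    ∀ V, Dist V → ((V : T) ∣ ((Polynomial.derivative P : Polynomial A) : T)) →
      (∀ W, Dist W → Irreducible W → (W : T) ∣ V → ¬ (W : T) ∣ P) →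
      icod (Ideal.span {(V : T), (P : T)}) =
        icod (Ideal.span {(V : T), ((dx P : Polynomial A) : T)}) + V.natDegree := by
  apply Dist.induct
  · intro _ _
    rw [Ideal.span_insert, Ideal.span_insert, Polynomial.coe_one, Ideal.span_singleton_one,
      top_sup_eq, top_sup_eq, Polynomial.natDegree_one]
    simp
  · intro V W hV hW hirr ih hdvd hcop
    obtain ⟨B⟩ := exists_branch hV hirr
    rw [Polynomial.coe_mul] at hdvd hcop ⊢
    have h1 : ¬ (V : T) ∣ P := hcop V hV hirr (dvd_mul_right _ _)
    have h2 : (V : T) ∣ ((Polynomial.derivative P : Polynomial A) : T) := (dvd_mul_right _ _).trans hdvd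
    have h3 := B.teissier_irr h0 h2
    have h4 : ¬ (V : T) ∣ (dx P : Polynomial A) := by
      intro h
      rw [(B.ker _).2 h, PowerSeries.order_zero, top_add, PowerSeries.order_eq_top, B.ker] at h3
      exact h1 h3
    rw [icod_mul B.prime h1, icod_mul B.prime h4, B.icod_pair h1, B.icod_pair h4, h3,
      ih ((dvd_mul_left _ _).trans hdvd) (fun U hU hU' hd => hcop U hU hU' (hd.mul_left _)),
      hV.1.natDegree_mul hW.1]
    push_cast
    ring

theorem teissier {P : Polynomial A} {n : ℕ} (hn0 : n ≠ 0)
    (h0 : ∀ i < n, PowerSeries.constantCoeff (P.coeff i) = 0)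
    (hn : PowerSeries.constantCoeff (P.coeff n) ≠ 0)
    (hcop : ∀ W, Dist W → Irreducible W → (W : T) ∣ ((Polynomial.derivative P : Polynomial A) : T) →
      ¬ (W : T) ∣ P) :
    icod (Ideal.span {((Polynomial.derivative P : Polynomial A) : T), (P : T)}) + 1 =
      icod (Ideal.span {((dx P : Polynomial A) : T), ((Polynomial.derivative P : Polynomial A) : T)})
        + n := by
  obtain ⟨m, rfl⟩ : ∃ m, n = m + 1 := ⟨n - 1, by omega⟩
  obtain ⟨W, h, hW, hWn, hu, he⟩ := wprep (G := ((Polynomial.derivative P : Polynomial A) : T)) (n := m)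
    (by
      intro i hi
      rw [Polynomial.coeff_coe, Polynomial.coeff_derivative, map_mul, h0 _ (by omega), zero_mul])
    (by
      rw [Polynomial.coeff_coe, Polynomial.coeff_derivative, map_mul]
      apply mul_ne_zero hn
      rw [map_add, map_natCast, map_one]
      exact_mod_cast Nat.succ_ne_zero m)
  have hs : ∀ G : T, Ideal.span {((Polynomial.derivative P : Polynomial A) : T), G} =
      Ideal.span {(W : T), G} := by
    intro G
    rw [Ideal.span_insert, Ideal.span_insert, he, Ideal.span_singleton_mul_right_unit hu]
  have hd : (W : T) ∣ ((Polynomial.derivative P : Polynomial A) : T) := he ▸ dvd_mul_right _ _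
  rw [Set.pair_comm ((dx P : Polynomial A) : T), hs, hs,
    teissier_aux (h0 0 (by omega)) W hW hd (fun U h1 h2 h3 => hcop U h1 h2 (h3.trans hd)), hWn]
  push_cast
  ring

end MF

namespace MF

theorem Dist.not_isUnit {V : Polynomial A} (hV : Dist V) (h : V.natDegree ≠ 0) : ¬ IsUnit (V : T) := by
  intro hu
  rw [PowerSeries.isUnit_iff_constantCoeff, PowerSeries.isUnit_iff_constantCoeff,
    ← PowerSeries.coeff_zero_eq_constantCoeff_apply (V : T), Polynomial.coeff_coe,
    hV.2 0 (Nat.pos_of_ne_zero h)] at hu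
  exact not_isUnit_zero hu

theorem exists_branch_of_irreducible : ∀ V, Dist V → Irreducible (V : T) → Nonempty (Br V) := by
  apply Dist.induct
  · intro h
    rw [Polynomial.coe_one] at h
    exact (h.not_isUnit isUnit_one).elim
  · intro V W hV hW hirr _ h
    obtain ⟨B⟩ := exists_branch hV hirr
    rw [Polynomial.coe_mul] at h
    have h1 : W.natDegree = 0 := by
      by_contra h0
      rcases h.isUnit_or_isUnit rfl with h2 | h2
      · exact B.prime.not_isUnit h2
      · exact hW.not_isUnit h0 h2
    rw [Polynomial.eq_one_of_monic_natDegree_zero hW.1 h1, mul_one]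
    exact ⟨B⟩

theorem mul2_lt_top {a : ℕ∞} (h : a < ⊤) : 2 * a < ⊤ := by
  rw [two_mul]
  exact ENat.add_lt_top.2 ⟨h, h⟩

theorem pleib {R : Type*} [CommRing R] (f g : PowerSeries R) : PowerSeries.derivative R (f * g) =
    f * PowerSeries.derivative R g + g * PowerSeries.derivative R f :=
  (PowerSeries.derivative R).leibniz f g

section multi
variable {ι : Type} [Fintype ι] [DecidableEq ι] {W : ι → Polynomial A} (B : ∀ i, Br (W i))

/-- tuples which agree on `s` with an element of `T` -/
def Msub (s : Finset ι) : Submodule ℂ (ι → A) where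
  carrier := {z | ∃ p : T, ∀ i ∈ s, z i = (B i).ev p}
  zero_mem' := ⟨0, fun i _ => by simp⟩
  add_mem' := by
    rintro a b ⟨p, hp⟩ ⟨q, hq⟩
    exact ⟨p + q, fun i hi => by rw [map_add, Pi.add_apply, hp i hi, hq i hi]⟩
  smul_mem' := by
    rintro c a ⟨p, hp⟩
    exact ⟨c • p, fun i hi => by rw [map_smul, Pi.smul_apply, hp i hi]⟩

theorem mem_Msub {s : Finset ι} {z : ι → A} :
    z ∈ Msub B s ↔ ∃ p : T, ∀ i ∈ s, z i = (B i).ev p := Iff.rfl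

/-- intersection numbers -/
noncomputable def Int2 (i j : ι) : ℕ∞ := ((B i).ev (W j : T)).order

theorem Int2_symm (hna : ∀ i j, i ≠ j → ¬ (W i : T) ∣ W j) {i j : ι} (h : i ≠ j) :
    Int2 B i j = Int2 B j i := by
  rw [Int2, Int2, ← (B i).icod_pair (hna i j h), ← (B j).icod_pair (hna j i h.symm), Set.pair_comm]

theorem not_dvd_prod (B : ∀ i, Br (W i)) (hna : ∀ i j, i ≠ j → ¬ (W i : T) ∣ W j) {a : ι} {s : Finset ι} (ha : a ∉ s) :
    ¬ (W a : T) ∣ ∏ i ∈ s, (W i : T) := by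
  rw [(B a).prime.dvd_finsetProd_iff]
  rintro ⟨j, hj, h⟩
  exact hna a j (fun h => ha (h ▸ hj)) h

theorem prod_dvd (hna : ∀ i j, i ≠ j → ¬ (W i : T) ∣ W j) (s : Finset ι) (p : T) :
    (∏ i ∈ s, (W i : T)) ∣ p ↔ ∀ i ∈ s, (B i).ev p = 0 := by
  induction s using Finset.induction_on generalizing p with
  | empty => simp
  | insert a s ha ih =>
    rw [Finset.prod_insert ha, Finset.forall_mem_insert, ← ih, (B a).ker]
    constructor
    · intro h
      exact ⟨(dvd_mul_right _ _).trans h, (dvd_mul_left _ _).trans h⟩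
    · rintro ⟨h1, q, rfl⟩
      rcases (B a).prime.dvd_or_dvd h1 with h2 | h2
      · exact (not_dvd_prod B hna ha h2).elim
      · rw [mul_comm]
        exact mul_dvd_mul_left _ h2

theorem cod_Msub (hna : ∀ i j, i ≠ j → ¬ (W i : T) ∣ W j) (s : Finset ι) :
    2 * cod (Msub B s) = ∑ i ∈ s, (2 * (B i).delta + ∑ j ∈ s.erase i, Int2 B i j) := by
  induction s using Finset.induction_on with
  | empty =>
    have : Msub B ∅ = ⊤ := by
      rw [eq_top_iff]
      intro z _
      exact ⟨0, by simp⟩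
    rw [this, cod_top]; simp
  | insert a s ha ih =>
    have h1 := cod_add (LinearMap.single ℂ (fun _ : ι => A) a) (Msub B (insert a s))
    have hc : (B a).ev (∏ i ∈ s, (W i : T)) ≠ 0 := by
      rw [Ne, (B a).ker]
      exact not_dvd_prod B hna ha
    have h2 : (Msub B (insert a s)).comap (LinearMap.single ℂ (fun _ : ι => A) a) =
        (LinearMap.range (B a).ev.toLinearMap).map
          (LinearMap.mulLeft ℂ ((B a).ev (∏ i ∈ s, (W i : T)))) := by
      ext c
      rw [Submodule.mem_comap, mem_Msub]
      constructor
      · rintro ⟨p, hp⟩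
        rw [Finset.forall_mem_insert] at hp
        obtain ⟨hpa, hps⟩ := hp
        have : ∏ i ∈ s, (W i : T) ∣ p := by
          rw [prod_dvd B hna]
          intro i hi
          rw [← hps i hi]
          have : i ≠ a := fun h => ha (h ▸ hi)
          simp [this]
        obtain ⟨q, rfl⟩ := this
        refine ⟨_, ⟨q, rfl⟩, ?_⟩
        rw [LinearMap.coe_single, Pi.single_eq_same] at hpa
        rw [hpa, map_mul]
        rfl
      · rintro ⟨_, ⟨q, rfl⟩, rfl⟩
        refine ⟨(∏ i ∈ s, (W i : T)) * q, ?_⟩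
        rw [Finset.forall_mem_insert]
        constructor
        · rw [LinearMap.coe_single, Pi.single_eq_same, map_mul]
          rfl
        · intro i hi
          have : i ≠ a := fun h => ha (h ▸ hi)
          rw [LinearMap.coe_single, Pi.single_eq_of_ne this]
          exact ((prod_dvd B hna s _).1 (dvd_mul_right _ _) i hi).symm
    have h3 : Msub B (insert a s) ⊔ LinearMap.range (LinearMap.single ℂ (fun _ : ι => A) a) =
        Msub B s := by
      apply le_antisymm
      · apply sup_le
        · rintro z ⟨p, hp⟩
          exact ⟨p, fun i hi => hp i (Finset.mem_insert_of_mem hi)⟩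
        · rintro _ ⟨c, rfl⟩
          refine ⟨0, fun i hi => ?_⟩
          have : i ≠ a := fun h => ha (h ▸ hi)
          rw [LinearMap.coe_single, Pi.single_eq_of_ne this, map_zero]
      · rintro z ⟨p, hp⟩
        rw [Submodule.mem_sup]
        refine ⟨Function.update z a ((B a).ev p), ⟨p, ?_⟩, _, ⟨z a - (B a).ev p, rfl⟩, ?_⟩
        · intro i hi
          by_cases h : i = a
          · subst h; simp
          · rw [Function.update_of_ne h]
            exact hp i ((Finset.mem_insert.1 hi).resolve_left h)
        · ext1 i
          by_cases h : i = a
          · subst h; simp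
          · simp [h]
    rw [h2, h3, (B a).cod_mul _ hc, map_prod, order_finprod] at h1
    rw [h1, mul_add, ih, Finset.sum_insert ha, Finset.erase_insert ha]
    have h4 : ∀ i ∈ s, 2 * (B i).delta + ∑ j ∈ (insert a s).erase i, Int2 B i j =
        (2 * (B i).delta + ∑ j ∈ s.erase i, Int2 B i j) + Int2 B a i := by
      intro i hi
      have hia : i ≠ a := fun h => ha (h ▸ hi)
      rw [Finset.erase_insert_of_ne hia.symm, Finset.sum_insert
        (fun h => ha (Finset.mem_of_mem_erase h)), Int2_symm B hna hia]
      ring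
    rw [Finset.sum_congr rfl h4, Finset.sum_add_distrib (g := fun i => Int2 B a i)]
    change 2 * (∑ i ∈ s, Int2 B a i + _) + _ = _
    ring

theorem icod_prod (G : T) (hG : ∀ i, ¬ (W i : T) ∣ G) (s : Finset ι) :
    icod (Ideal.span {∏ i ∈ s, (W i : T), G}) = ∑ i ∈ s, ((B i).ev G).order := by
  induction s using Finset.induction_on with
  | empty =>
    rw [Finset.prod_empty, Ideal.span_insert, Ideal.span_singleton_one, top_sup_eq]
    exact cod_top
  | insert a s ha ih =>
    rw [Finset.prod_insert ha, Finset.sum_insert ha, icod_mul (B a).prime (hG a), ih,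
      (B a).icod_pair (hG a)]

theorem dist_prod (B : ∀ i, Br (W i)) (s : Finset ι) : Dist (∏ i ∈ s, W i) := by
  induction s using Finset.induction_on with
  | empty =>
    rw [Finset.prod_empty]
    exact ⟨Polynomial.monic_one, by simp⟩
  | insert a s ha ih =>
    rw [Finset.prod_insert ha, dist_iff]
    exact ((dist_iff _).1 (B a).dist).mul ((dist_iff _).1 ih)

theorem order_evderiv (hna : ∀ i j, i ≠ j → ¬ (W i : T) ∣ W j) {P : Polynomial A} {u : T}
    (hu : IsUnit u) (hP : (P : T) = u * ∏ i, (W i : T)) (i : ι) :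
    ((B i).ev ((Polynomial.derivative P : Polynomial A) : T)).order + 1 =
      2 * (B i).delta + (W i).natDegree + ∑ j ∈ Finset.univ.erase i, Int2 B i j := by
  rw [← (B i).main, ← PowerSeries.derivative_coe, hP,
    ← Finset.mul_prod_erase _ _ (Finset.mem_univ i), pleib,
    pleib, PowerSeries.derivative_coe]
  simp only [smul_eq_mul, map_add, map_mul, (B i).ev_V, zero_mul, add_zero, zero_add]
  rw [PowerSeries.order_mul, PowerSeries.order_mul, map_prod, order_finprod]
  have h : ((B i).ev u).order = 0 := by
    by_contra hcon
    rw [← ne_eq, PowerSeries.order_ne_zero_iff_constCoeff_eq_zero] at hcon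
    have := hu.map (B i).ev
    rw [PowerSeries.isUnit_iff_constantCoeff, hcon] at this
    exact not_isUnit_zero this
  rw [h]
  change 0 + (∑ j ∈ Finset.univ.erase i, Int2 B i j + _) + 1 = _
  ring

theorem delta_tot_ne_top (hna : ∀ i j, i ≠ j → ¬ (W i : T) ∣ W j) (s : Finset ι) :
    cod (Msub B s) ≠ ⊤ := by
  intro h
  have h1 := cod_Msub B hna s
  rw [h, ENat.mul_top (by norm_num)] at h1
  have h2 : ∑ i ∈ s, (2 * (B i).delta + ∑ j ∈ s.erase i, Int2 B i j) < ⊤ := by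
    rw [ENat.sum_lt_top]
    intro i hi
    apply ENat.add_lt_top.2 ⟨mul2_lt_top (B i).delta_ne_top.lt_top, ?_⟩
    rw [ENat.sum_lt_top]
    intro j hj
    rw [lt_top_iff_ne_top, Int2, Ne, PowerSeries.order_eq_top, (B i).ker]
    exact hna i j (Finset.ne_of_mem_erase hj).symm
  exact h2.ne h1.symm

theorem main_count (hna : ∀ i j, i ≠ j → ¬ (W i : T) ∣ W j) {P : Polynomial A} {u : T}
    (hu : IsUnit u) (hP : (P : T) = u * ∏ i, (W i : T)) {n : ℕ} (hn0 : n ≠ 0)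
    (h0 : ∀ i < n, PowerSeries.constantCoeff (P.coeff i) = 0)
    (hn : PowerSeries.constantCoeff (P.coeff n) ≠ 0) :
    icod (Ideal.span {((dx P : Polynomial A) : T), ((Polynomial.derivative P : Polynomial A) : T)})
      + Fintype.card ι = 2 * cod (Msub B Finset.univ) + 1 := by
  have hnd : ∀ i, ¬ (W i : T) ∣ ((Polynomial.derivative P : Polynomial A) : T) := by
    intro i h
    have h1 := order_evderiv B hna hu hP i
    rw [((B i).ker _).2 h, PowerSeries.order_zero, top_add] at h1
    have h2 : 2 * (B i).delta + (W i).natDegree + ∑ j ∈ Finset.univ.erase i, Int2 B i j < ⊤ := by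
      apply ENat.add_lt_top.2 ⟨ENat.add_lt_top.2 ⟨mul2_lt_top
        (B i).delta_ne_top.lt_top, ENat.natCast_lt_top _⟩, ?_⟩
      rw [ENat.sum_lt_top]
      intro j hj
      rw [lt_top_iff_ne_top, Int2, Ne, PowerSeries.order_eq_top, (B i).ker]
      exact hna i j (Finset.ne_of_mem_erase hj).symm
    exact h2.ne h1.symm
  have ht := teissier hn0 h0 hn (by
    intro V hV hirr hd hdP
    obtain ⟨B'⟩ := exists_branch hV hirr
    rw [hP] at hdP
    rcases B'.prime.dvd_or_dvd hdP with h | h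
    · exact B'.prime.not_isUnit (isUnit_of_dvd_unit h hu)
    · rw [B'.prime.dvd_finsetProd_iff] at h
      obtain ⟨i, -, hi⟩ := h
      have := (B'.prime.irreducible.associated_of_dvd (B i).prime.irreducible hi).symm.dvd
      exact hnd i (this.trans hd))
  have hdeg : ∑ i, (W i).natDegree = n := by
    have hD := dist_prod B Finset.univ
    have h1 := hD.order_coe
    have h2 := order_res (G := (P : T)) (n := n) (by simpa only [Polynomial.coeff_coe] using h0)
      (by simpa only [Polynomial.coeff_coe] using hn)
    have hc : ((∏ i, W i : Polynomial A) : T) = ∏ i, (W i : T) := by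
      exact map_prod Polynomial.coeToPowerSeries.ringHom _ _
    have hu' : ((PowerSeries.map (IsLocalRing.residue A)) u).order = 0 := by
      by_contra hcon
      rw [← ne_eq, PowerSeries.order_ne_zero_iff_constCoeff_eq_zero] at hcon
      have := hu.map (PowerSeries.map (IsLocalRing.residue A))
      rw [PowerSeries.isUnit_iff_constantCoeff, hcon] at this
      exact not_isUnit_zero this
    rw [hP, ← hc, map_mul, PowerSeries.order_mul, h1, hu', zero_add,
      Polynomial.natDegree_prod_of_monic _ _ (fun i _ => (B i).dist.1)] at h2
    exact_mod_cast h2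
  have hi : icod (Ideal.span {((Polynomial.derivative P : Polynomial A) : T), (P : T)}) =
      ∑ i, ((B i).ev ((Polynomial.derivative P : Polynomial A) : T)).order := by
    rw [← icod_prod B _ hnd, Set.pair_comm, Ideal.span_insert, Ideal.span_insert, hP,
      Ideal.span_singleton_mul_left_unit hu]
  have hs : icod (Ideal.span {((Polynomial.derivative P : Polynomial A) : T), (P : T)}) +
      Fintype.card ι = 2 * cod (Msub B Finset.univ) + n := by
    have : ((Fintype.card ι : ℕ) : ℕ∞) = ∑ i : ι, 1 := by simp
    rw [hi, this, ← Finset.sum_add_distrib, Finset.sum_congr rfl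
      (fun i _ => order_evderiv B hna hu hP i), cod_Msub B hna, ← hdeg]
    push_cast
    rw [← Finset.sum_add_distrib]
    exact Finset.sum_congr rfl (fun i _ => by ring)
  apply ENat.add_left_injective_of_ne_top (ENat.natCast_ne_top n)
  change _ + _ + _ = _ + _ + _
  calc _ = (icod (Ideal.span {((dx P : Polynomial A) : T),
        ((Polynomial.derivative P : Polynomial A) : T)}) + n) + Fintype.card ι := by ring
    _ = _ := by rw [← ht, add_right_comm, hs]; ring

end multi

theorem exists_weierstrass {ι : Type} [Fintype ι] [DecidableEq ι] {P : Polynomial A} {u : T} {g : ι → T}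
    (hu : IsUnit u) (hP : (P : T) = u * ∏ i, g i) {n : ℕ}
    (hn : PowerSeries.constantCoeff (P.coeff n) ≠ 0)
    (hirr : ∀ i, Irreducible (g i)) (hna : ∀ i j, i ≠ j → ¬ Associated (g i) (g j)) :
    ∃ (W : ι → Polynomial A) (v : T), Nonempty (∀ i, Br (W i)) ∧ IsUnit v ∧
      (P : T) = v * ∏ i, (W i : T) ∧ ∀ i j, i ≠ j → ¬ (W i : T) ∣ W j := by
  have key : ∀ i, ∃ (W : Polynomial A) (h : T), IsUnit h ∧ g i = (W : T) * h ∧ Nonempty (Br W) := by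
    intro i
    have h1 : (g i).map (PowerSeries.constantCoeff (R := ℂ)) ≠ 0 := by
      intro h
      apply hn
      have h2 := congrArg (PowerSeries.map (PowerSeries.constantCoeff (R := ℂ))) hP
      rw [map_mul, map_prod, Finset.prod_eq_zero (Finset.mem_univ i) h, mul_zero] at h2
      have h3 := congrArg (PowerSeries.coeff n) h2
      rwa [PowerSeries.coeff_map, Polynomial.coeff_coe, map_zero] at h3
    have h2 : ∃ m, PowerSeries.constantCoeff (PowerSeries.coeff m (g i)) ≠ 0 := by
      by_contra! hcon
      apply h1
      ext m
      rw [PowerSeries.coeff_map, hcon, map_zero]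
    classical
    obtain ⟨V, h, hV, -, hh, he⟩ := wprep (n := Nat.find h2)
      (fun k hk => not_not.1 (Nat.find_min h2 hk)) (Nat.find_spec h2)
    refine ⟨V, h, hh, he, exists_branch_of_irreducible V hV ?_⟩
    have := hirr i
    rw [he, irreducible_mul_isUnit hh] at this
    exact this
  choose W h hh he hB using key
  refine ⟨W, u * ∏ i, h i, ⟨fun i => (hB i).some⟩, hu.mul ?_, ?_, ?_⟩
  · exact IsUnit.prod_univ_iff.2 hh
  · rw [hP]
    simp only [he, Finset.prod_mul_distrib]
    ring
  · intro i j hij hd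
    apply hna i j hij
    have h1 := ((hB i).some.prime.irreducible.associated_of_dvd (hB j).some.prime.irreducible hd)
    rw [he, he]
    exact h1.mul_mul ((associated_one_iff_isUnit.2 (hh i)).trans (associated_one_iff_isUnit.2 (hh j)).symm)

end MF

namespace MF

theorem finite_of_cod {M : Type*} [AddCommGroup M] [Module ℂ M] {N : Submodule ℂ M} (h : cod N ≠ ⊤) :
    Module.Finite ℂ (M ⧸ N) := by
  have : IsFiniteLength ℂ (M ⧸ N) := Module.length_ne_top_iff.1 h
  rw [isFiniteLength_iff_isNoetherian_isArtinian] at this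
  obtain ⟨h1, h2⟩ := this
  infer_instance

section normal
variable {ι : Type} [Fintype ι] {R : Type} [CommRing R] [Algebra ℂ R]
  (φ : R →ₐ[ℂ] (ι → A))

theorem exists_conductor (hcod : cod (LinearMap.range φ.toLinearMap) ≠ ⊤) (x : R)
    (hx : ∀ i, Transcendental ℂ (φ x i)) :
    ∃ d : R, (∀ i, φ d i ≠ 0) ∧ ∀ w : ι → A, ∃ s : R, φ s = φ d * w := by
  have := finite_of_cod hcod
  let N := LinearMap.range φ.toLinearMap
  have hle : N ≤ N.comap (LinearMap.mulLeft ℂ (φ x)) := by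
    rintro _ ⟨r, rfl⟩
    exact ⟨x * r, by simp⟩
  let m : (ι → A) ⧸ N →ₗ[ℂ] (ι → A) ⧸ N := N.mapQ N (LinearMap.mulLeft ℂ (φ x)) hle
  have key : ∀ (p : Polynomial ℂ) (w : ι → A),
      Polynomial.aeval (R := ℂ) (A := Module.End ℂ ((ι → A) ⧸ N)) m p (N.mkQ w) =
        N.mkQ (φ (Polynomial.aeval x p) * w) := by
    intro p
    induction p using Polynomial.induction_on' with
    | add p q hp hq =>
      intro w
      rw [map_add, LinearMap.add_apply, hp, hq, ← map_add, map_add (Polynomial.aeval x), map_add φ, add_mul]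
    | monomial n a =>
      intro w
      rw [Polynomial.aeval_monomial, Polynomial.aeval_monomial, map_mul φ, AlgHom.commutes,
        Module.End.mul_apply, Module.algebraMap_end_apply, mul_assoc, ← Algebra.smul_def,
        map_smul]
      congr 1
      induction n generalizing w with
      | zero => simp
      | succ n ih =>
        rw [pow_succ, Module.End.mul_apply]
        have : m (N.mkQ w) = N.mkQ (φ x * w) := rfl
        rw [this, ih, pow_succ, map_mul φ, mul_assoc]
  have hint : IsIntegral ℂ (m : Module.End ℂ ((ι → A) ⧸ N)) := Algebra.IsIntegral.isIntegral _
  refine ⟨Polynomial.aeval x (minpoly ℂ (m : Module.End ℂ ((ι → A) ⧸ N))), ?_, ?_⟩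
  · intro i h
    apply minpoly.ne_zero hint
    refine (transcendental_iff.1 (hx i)) _ ?_
    rw [← h, ← Polynomial.aeval_algHom_apply]
    exact Polynomial.aeval_algHom_apply (Pi.evalAlgHom ℂ (fun _ : ι => A) i) (φ x) _
  · intro w
    have h := key (minpoly ℂ (m : Module.End ℂ ((ι → A) ⧸ N))) w
    rw [minpoly.aeval, LinearMap.zero_apply] at h
    have h2 := (Submodule.Quotient.mk_eq_zero N).1 h.symm
    obtain ⟨s, hs⟩ := h2
    exact ⟨s, hs⟩

/-- the embedding in the product of fields of fractions -/
noncomputable def toL : R →+* (ι → FractionRing A) :=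
  (Pi.ringHom (fun i => (algebraMap A (FractionRing A)).comp (Pi.evalRingHom (fun _ : ι => A) i))).comp
    φ.toRingHom

theorem toL_apply (r : R) (i : ι) : toL φ r i = algebraMap A (FractionRing A) (φ r i) := rfl

theorem isFractionRing_L (hinj : Function.Injective φ) (d : R) (hd : ∀ i, φ d i ≠ 0)
    (hd2 : ∀ w : ι → A, ∃ s : R, φ s = φ d * w) :
    @IsFractionRing R _ (ι → FractionRing A) _ (toL φ).toAlgebra := by
  classical
  letI := (toL φ).toAlgebra
  have hnz : ∀ s : R, s ∈ nonZeroDivisors R ↔ ∀ i, φ s i ≠ 0 := by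
    intro s
    constructor
    · intro hs i hi
      obtain ⟨t, ht⟩ := hd2 (Pi.single i 1)
      have h1 : t * s = 0 := by
        apply hinj
        rw [map_mul, ht, map_zero]
        ext1 j
        by_cases hj : j = i
        · subst hj; simp [hi]
        · simp [hj]
      have h2 : t = 0 := (mem_nonZeroDivisors_iff.1 hs).2 t h1
      rw [h2, map_zero] at ht
      have := congrFun ht i
      simp at this
      exact hd i this.symm
    · intro h
      rw [mem_nonZeroDivisors_iff_right]
      intro t ht
      apply hinj
      rw [map_zero]
      ext1 i
      have := congrFun (congrArg φ ht) i
      rw [map_mul, map_zero, Pi.mul_apply, Pi.zero_apply, mul_eq_zero] at this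
      exact this.resolve_right (h i)
  refine ⟨?_, ?_, ?_⟩
  · intro s
    have h := (hnz s).1 s.2
    rw [Pi.isUnit_iff]
    intro i
    rw [isUnit_iff_ne_zero]
    change algebraMap A (FractionRing A) (φ s i) ≠ 0
    rw [Ne, FaithfulSMul.algebraMap_eq_zero_iff]
    exact h i
  · intro z
    have h1 : ∀ i, ∃ a b : A, b ≠ 0 ∧ z i * algebraMap A (FractionRing A) b = algebraMap _ _ a := by
      intro i
      obtain ⟨⟨a, b⟩, h⟩ := IsLocalization.surj (nonZeroDivisors A) (z i)
      exact ⟨a, b, nonZeroDivisors.ne_zero b.2, h⟩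
    choose a b hb hab using h1
    obtain ⟨r, hr⟩ := hd2 a
    obtain ⟨s, hs⟩ := hd2 b
    refine ⟨⟨r, ⟨s, (hnz s).2 ?_⟩⟩, ?_⟩
    · intro i
      rw [hs]
      exact mul_ne_zero (hd i) (hb i)
    · ext1 i
      change z i * algebraMap A (FractionRing A) (φ s i) = algebraMap A (FractionRing A) (φ r i)
      rw [hr, hs, Pi.mul_apply, Pi.mul_apply, map_mul, map_mul, ← hab]
      ring
  · intro s t h
    refine ⟨1, ?_⟩
    have : s = t := by
      apply hinj
      ext1 i
      have := congrFun h i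
      exact FaithfulSMul.algebraMap_injective A (FractionRing A) this
    rw [this]

theorem isIntegral_O (hcod : cod (LinearMap.range φ.toLinearMap) ≠ ⊤) (z : ι → A) :
    φ.toRingHom.IsIntegralElem z := by
  letI : Algebra R (ι → A) := φ.toRingHom.toAlgebra
  haveI : IsScalarTower ℂ R (ι → A) := IsScalarTower.of_algebraMap_eq (fun c => (φ.commutes c).symm)
  have := finite_of_cod hcod
  let N : Submodule R (ι → A) := LinearMap.range (Algebra.linearMap R (ι → A))
  have hN : N.restrictScalars ℂ = LinearMap.range φ.toLinearMap := by
    ext z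
    rfl
  rw [← hN] at this
  have h2 : Module.Finite ℂ ((ι → A) ⧸ N) :=
    Module.Finite.equiv (Submodule.Quotient.restrictScalarsEquiv ℂ N)
  have h3 : Module.Finite R ((ι → A) ⧸ N) := Module.Finite.of_restrictScalars_finite ℂ R _
  have h4 : Module.Finite R N := Module.Finite.range _
  have h5 : Module.Finite R (ι → A) := Module.Finite.of_submodule_quotient N
  exact (Algebra.IsIntegral.isIntegral (R := R) z)

theorem normal (hinj : Function.Injective φ) (hcod : cod (LinearMap.range φ.toLinearMap) ≠ ⊤) (x : R)
    (hx : ∀ i, Transcendental ℂ (φ x i))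
    (K : Type) [CommRing K] [Algebra R K] [IsFractionRing R K] [Algebra ℂ K] [IsScalarTower ℂ R K] :
    (Module.finrank ℂ (integralClosure R K ⧸
      LinearMap.range (Algebra.linearMap R (integralClosure R K))) : ℕ∞) =
      cod (LinearMap.range φ.toLinearMap) := by
  obtain ⟨d, hd, hd2⟩ := exists_conductor φ hcod x hx
  letI : Algebra R (ι → FractionRing A) := (toL φ).toAlgebra
  haveI : IsFractionRing R (ι → FractionRing A) := isFractionRing_L φ hinj d hd hd2
  let e : K ≃ₐ[R] (ι → FractionRing A) := IsLocalization.algEquiv (nonZeroDivisors R) K _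
  let j0 : (ι → A) →+* (ι → FractionRing A) :=
    Pi.ringHom (fun i => (algebraMap A (FractionRing A)).comp (Pi.evalRingHom (fun _ : ι => A) i))
  let j : (ι → A) →+* K := e.symm.toRingEquiv.toRingHom.comp j0
  have hj0 : Function.Injective j0 := by
    intro a b h
    ext1 i
    exact FaithfulSMul.algebraMap_injective A (FractionRing A) (congrFun h i)
  have hj : Function.Injective j := e.symm.injective.comp hj0
  have hjφ : ∀ r, j (φ r) = algebraMap R K r := by
    intro r
    change e.symm (j0 (φ r)) = _
    rw [AlgEquiv.symm_apply_eq, AlgEquiv.commutes]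
    rfl
  have hjint : ∀ z, IsIntegral R (j z) := by
    intro z
    obtain ⟨p, hp, hpz⟩ := isIntegral_O φ hcod z
    refine ⟨p, hp, ?_⟩
    have : algebraMap R K = j.comp φ.toRingHom := by
      ext r
      exact (hjφ r).symm
    rw [this, ← Polynomial.hom_eval₂, hpz, map_zero]
  have hsurj : ∀ k : K, IsIntegral R k → ∃ z, j z = k := by
    intro k hk
    have h1 : IsIntegral R (e k) := hk.map e
    obtain ⟨p, hp, hpz⟩ := h1
    have h2 : ∀ i, ∃ a : A, algebraMap A (FractionRing A) a = e k i := by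
      intro i
      apply IsIntegrallyClosed.isIntegral_iff.1
      refine ⟨p.map ((Pi.evalRingHom (fun _ : ι => A) i).comp φ.toRingHom), hp.map _, ?_⟩
      have h3 := congrArg (Pi.evalRingHom (fun _ : ι => FractionRing A) i) hpz
      rw [Polynomial.hom_eval₂, map_zero] at h3
      rw [Polynomial.eval₂_map]
      exact h3
    choose a ha using h2
    refine ⟨a, ?_⟩
    change e.symm (j0 a) = k
    rw [AlgEquiv.symm_apply_eq]
    ext1 i
    exact ha i
  let J : (ι → A) →ₗ[ℂ] integralClosure R K :=
    { toFun := fun z => ⟨j z, hjint z⟩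
      map_add' := fun a b => Subtype.ext (map_add j a b)
      map_smul' := fun c a => by
        apply Subtype.ext
        change j (c • a) = c • j a
        rw [Algebra.smul_def, map_mul, Algebra.smul_def, ← φ.commutes, hjφ,
          ← IsScalarTower.algebraMap_apply] }
  have hJ : Function.Surjective J := by
    rintro ⟨k, hk⟩
    obtain ⟨z, hz⟩ := hsurj k hk
    exact ⟨z, Subtype.ext hz⟩
  let N := (LinearMap.range (Algebra.linearMap R (integralClosure R K))).restrictScalars ℂ
  have hN : N.comap J = LinearMap.range φ.toLinearMap := by
    ext z
    constructor
    · rintro ⟨r, hr⟩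
      refine ⟨r, hj ?_⟩
      change j (φ r) = j z
      rw [hjφ]
      exact congrArg Subtype.val hr
    · rintro ⟨r, rfl⟩
      refine ⟨r, Subtype.ext ?_⟩
      exact (hjφ r).symm
  rw [← hN, cod_comap J hJ]
  have hfin : cod N ≠ ⊤ := by
    rw [← cod_comap J hJ, hN]; exact hcod
  have h6 := finite_of_cod hfin
  rw [cod, Module.length_eq_finrank]
  rw [(Submodule.Quotient.restrictScalarsEquiv ℂ _).finrank_eq]

end normal

end MF

namespace MF

/-! ### Coordinates -/

/-- the shear -/
noncomputable def shv (c : ℂ) : Fin 2 → MvPowerSeries (Fin 2) ℂ :=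
  ![MvPowerSeries.X 0 + c • MvPowerSeries.X 1, MvPowerSeries.X 1]

theorem shv_hasSubst (c : ℂ) : MvPowerSeries.HasSubst (shv c) := by
  apply MvPowerSeries.hasSubst_of_constantCoeff_zero
  intro s
  fin_cases s <;> simp [shv, MvPowerSeries.smul_eq_C_mul]

/-- the shear as an algebra homomorphism -/
noncomputable def sh (c : ℂ) : MvPowerSeries (Fin 2) ℂ →ₐ[ℂ] MvPowerSeries (Fin 2) ℂ :=
  MvPowerSeries.substAlgHom (shv_hasSubst c)

theorem sh_X (c : ℂ) (i : Fin 2) : sh c (MvPowerSeries.X i) = shv c i := by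
  rw [sh, MvPowerSeries.substAlgHom_X]

theorem sh_sh (c : ℂ) (F : MvPowerSeries (Fin 2) ℂ) : sh (-c) (sh c F) = F := by
  have h := MvPowerSeries.substAlgHom_comp_substAlgHom_apply (R := ℂ) (S := ℂ) (T := ℂ)
    (shv_hasSubst c) (shv_hasSubst (-c)) F
  unfold sh
  rw [h]
  have h2 : (fun s => MvPowerSeries.substAlgHom (R := ℂ) (shv_hasSubst (-c)) (shv c s)) = MvPowerSeries.X := by
    ext1 s
    change sh (-c) (shv c s) = _
    fin_cases s
    · simp [shv, sh_X]
    · simp [shv, sh_X]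
  rw [MvPowerSeries.coe_substAlgHom, h2, MvPowerSeries.subst_self]
  rfl

/-- the shear as an automorphism -/
noncomputable def shE (c : ℂ) : MvPowerSeries (Fin 2) ℂ ≃ₐ[ℂ] MvPowerSeries (Fin 2) ℂ :=
  AlgEquiv.ofAlgHom (sh c) (sh (-c))
    (AlgHom.ext fun F => by simpa using sh_sh (-c) F) (AlgHom.ext fun F => sh_sh c F)

/-- indices -/
def ixE : Fin 2 ≃ Option Unit where
  toFun := ![some (), none]
  invFun := fun o => match o with
    | some _ => 0
    | none => 1
  left_inv := by intro i; fin_cases i <;> rfl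
  right_inv := by rintro (_ | _) <;> rfl

/-- change of coordinates -/
noncomputable def Th (c : ℂ) : MvPowerSeries (Fin 2) ℂ ≃ₐ[ℂ] T :=
  ((shE c).trans (MvPowerSeries.renameEquiv (R := ℂ) ixE)).trans (MvPowerSeries.optionEquivLeft Unit ℂ)

theorem Th_X1 (c : ℂ) : Th c (MvPowerSeries.X 1) = PowerSeries.X := by
  change MvPowerSeries.optionEquivLeft Unit ℂ (MvPowerSeries.renameEquiv (R := ℂ) ixE
    (sh c (MvPowerSeries.X 1))) = _
  rw [sh_X]
  have : shv c 1 = MvPowerSeries.X 1 := rfl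
  rw [this]
  simp [ixE]

theorem Th_X0 (c : ℂ) : Th c (MvPowerSeries.X 0) = PowerSeries.C PowerSeries.X + c • PowerSeries.X := by
  change MvPowerSeries.optionEquivLeft Unit ℂ (MvPowerSeries.renameEquiv (R := ℂ) ixE
    (sh c (MvPowerSeries.X 0))) = _
  rw [sh_X]
  have : shv c 0 = MvPowerSeries.X 0 + c • MvPowerSeries.X 1 := rfl
  rw [this, map_add, map_smul, map_add, map_smul]
  simp [ixE]
  rfl

/-- change of coordinates on polynomials -/
noncomputable def La (c : ℂ) : MvPolynomial (Fin 2) ℂ →ₐ[ℂ] Polynomial A :=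
  MvPolynomial.aeval ![Polynomial.C PowerSeries.X + c • Polynomial.X, Polynomial.X]

theorem La_X0 (c : ℂ) : La c (MvPolynomial.X 0) = Polynomial.C PowerSeries.X + c • Polynomial.X := by
  simp [La]

theorem La_X1 (c : ℂ) : La c (MvPolynomial.X 1) = Polynomial.X := by
  simp [La]

theorem La_C (c a : ℂ) : La c (MvPolynomial.C a) = Polynomial.C (PowerSeries.C a) := by
  have := (La c).commutes a
  rw [← MvPolynomial.algebraMap_eq, this]
  rfl

theorem T_alg (c : ℂ) : algebraMap ℂ T c = PowerSeries.C (PowerSeries.C c) := by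
  rw [MvPowerSeries.algebraMap_apply]
  rfl

theorem P_smul (c : ℂ) (P : Polynomial A) : c • P = Polynomial.C (PowerSeries.C c) * P := by
  rw [Algebra.smul_def]
  rfl

theorem Th_coe (c : ℂ) (p : MvPolynomial (Fin 2) ℂ) :
    Th c (p : MvPowerSeries (Fin 2) ℂ) = ((La c p : Polynomial A) : T) := by
  induction p using MvPolynomial.induction_on with
  | C a =>
    rw [La_C, MvPolynomial.coe_C, Polynomial.coe_C, ← T_alg]
    exact (Th c).commutes a
  | add p q hp hq => rw [MvPolynomial.coe_add, map_add, map_add, hp, hq, Polynomial.coe_add]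
  | mul_X p i hp =>
    rw [MvPolynomial.coe_mul, map_mul, map_mul, hp, Polynomial.coe_mul, MvPolynomial.coe_X]
    congr 1
    fin_cases i
    · change Th c (MvPowerSeries.X 0) = ((La c (MvPolynomial.X 0) : Polynomial A) : T)
      rw [Th_X0, La_X0, Polynomial.coe_add, Polynomial.coe_C, P_smul, Polynomial.coe_mul,
        Polynomial.coe_C, Polynomial.coe_X, Algebra.smul_def, T_alg]
    · change Th c (MvPowerSeries.X 1) = ((La c (MvPolynomial.X 1) : Polynomial A) : T)
      rw [Th_X1, La_X1, Polynomial.coe_X]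

theorem dx_La (c : ℂ) (p : MvPolynomial (Fin 2) ℂ) : dx (La c p) = La c (pderiv 0 p) := by
  induction p using MvPolynomial.induction_on with
  | C a => rw [La_C, dx_C]; simp
  | add p q hp hq => simp only [map_add, hp, hq]
  | mul_X p i hp =>
    rw [map_mul, Derivation.leibniz, hp, Derivation.leibniz, map_add]
    simp only [smul_eq_mul, map_mul]
    congr 2
    fin_cases i
    · change dx (La c (MvPolynomial.X 0)) = La c (pderiv 0 (MvPolynomial.X 0))
      rw [La_X0, map_add, dx_C, P_smul, Derivation.leibniz, dx_X, dx_C, pderiv_X_self, map_one]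
      simp
    · change dx (La c (MvPolynomial.X 1)) = La c (pderiv 0 (MvPolynomial.X 1))
      rw [La_X1, dx_X, pderiv_X_of_ne (by decide), map_zero]

theorem derivative_La (c : ℂ) (p : MvPolynomial (Fin 2) ℂ) :
    Polynomial.derivative (La c p) =
      Polynomial.C (PowerSeries.C c) * La c (pderiv 0 p) + La c (pderiv 1 p) := by
  induction p using MvPolynomial.induction_on with
  | C a => rw [La_C]; simp
  | add p q hp hq => simp only [map_add, hp, hq]; ring
  | mul_X p i hp =>
    rw [map_mul, Polynomial.derivative_mul, hp, Derivation.leibniz, map_add, Derivation.leibniz,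
      map_add]
    simp only [smul_eq_mul, map_mul]
    have : Polynomial.derivative (La c (MvPolynomial.X i)) =
        Polynomial.C (PowerSeries.C c) * La c (pderiv 0 (MvPolynomial.X i)) +
          La c (pderiv 1 (MvPolynomial.X i)) := by
      fin_cases i
      · change Polynomial.derivative (La c (MvPolynomial.X 0)) =
          Polynomial.C (PowerSeries.C c) * La c (pderiv 0 (MvPolynomial.X 0)) +
          La c (pderiv 1 (MvPolynomial.X 0))
        rw [La_X0, pderiv_X_self, pderiv_X_of_ne (by decide), P_smul]
        simp
      · change Polynomial.derivative (La c (MvPolynomial.X 1)) =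
          Polynomial.C (PowerSeries.C c) * La c (pderiv 0 (MvPolynomial.X 1)) +
          La c (pderiv 1 (MvPolynomial.X 1))
        rw [La_X1, pderiv_X_self, pderiv_X_of_ne (by decide)]
        simp
    rw [this]
    ring

theorem eval_La (c : ℂ) (p : MvPolynomial (Fin 2) ℂ) (b : ℂ) :
    ((La c p).map PowerSeries.constantCoeff).eval b = MvPolynomial.eval ![c * b, b] p := by
  induction p using MvPolynomial.induction_on with
  | C a => rw [La_C]; simp
  | add p q hp hq => rw [map_add, Polynomial.map_add, Polynomial.eval_add, hp, hq, map_add]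
  | mul_X p i hp =>
    rw [map_mul, Polynomial.map_mul, Polynomial.eval_mul, hp, map_mul]
    congr 1
    fin_cases i
    · change ((La c (MvPolynomial.X 0)).map _).eval b = MvPolynomial.eval ![c * b, b] (MvPolynomial.X 0)
      rw [La_X0, P_smul]
      simp
    · change ((La c (MvPolynomial.X 1)).map _).eval b = MvPolynomial.eval ![c * b, b] (MvPolynomial.X 1)
      rw [La_X1]
      simp

theorem exists_good {f : MvPolynomial (Fin 2) ℂ} (hf : f ≠ 0) (h0 : constantCoeff f = 0) :
    ∃ (c : ℂ) (n : ℕ), n ≠ 0 ∧ (∀ i < n, PowerSeries.constantCoeff ((La c f).coeff i) = 0) ∧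
      PowerSeries.constantCoeff ((La c f).coeff n) ≠ 0 := by
  classical
  have h1 : f * MvPolynomial.X 1 ≠ 0 := mul_ne_zero hf (MvPolynomial.X_ne_zero 1)
  have h2 : ∃ v : Fin 2 → ℂ, MvPolynomial.eval v (f * MvPolynomial.X 1) ≠ 0 := by
    by_contra! hcon
    exact h1 (MvPolynomial.funext (fun v => by rw [hcon, map_zero]))
  obtain ⟨v, hv⟩ := h2
  rw [map_mul, MvPolynomial.eval_X] at hv
  have hv1 := right_ne_zero_of_mul hv
  have hv2 := left_ne_zero_of_mul hv
  have h3 : (La (v 0 / v 1) f).map PowerSeries.constantCoeff ≠ 0 := by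
    intro h
    have := eval_La (v 0 / v 1) f (v 1)
    rw [h, Polynomial.eval_zero, div_mul_cancel₀ _ hv1] at this
    apply hv2
    rw [this]
    congr 1
    congr 1
    ext i; fin_cases i <;> rfl
  have h4 : ∃ n, PowerSeries.constantCoeff ((La (v 0 / v 1) f).coeff n) ≠ 0 := by
    by_contra! hcon
    apply h3
    ext n
    rw [Polynomial.coeff_map, hcon, Polynomial.coeff_zero]
  refine ⟨v 0 / v 1, Nat.find h4, ?_, fun i hi => not_not.1 (Nat.find_min h4 hi), Nat.find_spec h4⟩
  intro h
  have h5 := Nat.find_spec h4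
  rw [h] at h5
  apply h5
  have h6 := eval_La (v 0 / v 1) f 0
  rw [← Polynomial.coeff_zero_eq_eval_zero, Polynomial.coeff_map] at h6
  have hz : (![v 0 / v 1 * 0, 0] : Fin 2 → ℂ) = 0 := by
    ext i; fin_cases i <;> simp
  rw [h6, hz, MvPolynomial.eval_zero, h0]

theorem transc {e : ℕ} (he : e ≠ 0) : Transcendental ℂ ((PowerSeries.X : A) ^ e) := by
  rw [transcendental_iff]
  intro p
  have h1 : Polynomial.aeval ((PowerSeries.X : A) ^ e) p = ((Polynomial.expand ℂ e p : Polynomial ℂ) : A) := by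
    induction p using Polynomial.induction_on' with
    | add p q hp hq => rw [map_add, map_add, hp, hq, Polynomial.coe_add]
    | monomial n a =>
      rw [Polynomial.aeval_monomial, Polynomial.expand_monomial, Polynomial.coe_monomial,
        ← pow_mul, ← Algebra.smul_def, PowerSeries.X_pow_eq, ← map_smul, smul_eq_mul, mul_one,
        mul_comm e n]
  intro hp
  rw [h1, Polynomial.coe_eq_zero_iff, Polynomial.expand_eq_zero (Nat.pos_of_ne_zero he)] at hp
  exact hp

end MF

namespace MF

theorem span_pair_aux {R : Type*} [CommRing R] (a b z : R) :
    Ideal.span {a, b} = Ideal.span {a, z * a + b} := by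
  apply le_antisymm
  · rw [Ideal.span_le]
    rintro w (h | h)
    · exact Ideal.mem_span_pair.2 ⟨1, 0, by rw [h]; ring⟩
    · exact Ideal.mem_span_pair.2 ⟨-z, 1, by rw [Set.mem_singleton_iff.1 h]; ring⟩
  · rw [Ideal.span_le]
    rintro w (h | h)
    · exact Ideal.mem_span_pair.2 ⟨1, 0, by rw [h]; ring⟩
    · exact Ideal.mem_span_pair.2 ⟨z, 1, by rw [Set.mem_singleton_iff.1 h]; ring⟩

theorem final (f : MvPolynomial (Fin 2) ℂ) (h0 : constantCoeff f = 0)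
    (r : ℕ) (u : (MvPowerSeries (Fin 2) ℂ)ˣ)
    (g : Fin r → MvPowerSeries (Fin 2) ℂ)
    (hirr : ∀ i, Irreducible (g i))
    (hna : ∀ i j, i ≠ j → ¬ Associated (g i) (g j))
    (hF : (↑f : MvPowerSeries (Fin 2) ℂ) = ↑u * ∏ i, g i) :
    ∃ φ : CurveGermRing f →ₐ[ℂ] (Fin r → A), Function.Injective φ ∧
      cod (LinearMap.range φ.toLinearMap) ≠ ⊤ ∧ (∃ x, ∀ i, Transcendental ℂ (φ x i)) ∧
      icod (Ideal.span {(↑(pderiv 0 f) : MvPowerSeries (Fin 2) ℂ),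
        (↑(pderiv 1 f) : MvPowerSeries (Fin 2) ℂ)}) + r =
          2 * cod (LinearMap.range φ.toLinearMap) + 1 := by
  have hf : f ≠ 0 := by
    rintro rfl
    rw [MvPolynomial.coe_zero] at hF
    have h1 : ∏ i, g i = 0 := by
      rcases mul_eq_zero.1 hF.symm with h | h
      · exact (u.ne_zero h).elim
      · exact h
    obtain ⟨i, -, hi⟩ := Finset.prod_eq_zero_iff.1 h1
    exact (hirr i).ne_zero hi
  obtain ⟨c, n, hn0, hlt, hn⟩ := exists_good hf h0
  have hP : ((La c f : Polynomial A) : T) = Th c u * ∏ i, Th c (g i) := by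
    rw [← Th_coe, hF, map_mul, map_prod]
  obtain ⟨W, v, ⟨B⟩, hv, hPW, hnW⟩ := exists_weierstrass (u.isUnit.map (Th c)) hP hn
    (fun i => (MulEquiv.irreducible_iff (Th c)).2 (hirr i))
    (fun i j hij h => hna i j hij (by
      have := h.map (Th c).symm
      simpa using this))
  have hcount := main_count B hnW hv hPW hn0 hlt hn
  have hfin := delta_tot_ne_top B hnW Finset.univ
  let E : MvPowerSeries (Fin 2) ℂ →ₐ[ℂ] (Fin r → A) :=
    (AlgHom.pi (fun i => (B i).ev)).comp (Th c).toAlgHom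
  have hE : ∀ s i, E s i = (B i).ev (Th c s) := fun s i => rfl
  have hker : ∀ s, E s = 0 ↔ (f : MvPowerSeries (Fin 2) ℂ) ∣ s := by
    intro s
    have h1 : E s = 0 ↔ ∏ i, (W i : T) ∣ Th c s := by
      rw [prod_dvd B hnW]
      constructor
      · intro h i _
        rw [← hE, h]; rfl
      · intro h
        ext1 i
        exact h i (Finset.mem_univ i)
    have h2 : ∏ i, (W i : T) ∣ Th c s ↔ Th c f ∣ Th c s := by
      rw [Th_coe, hPW, hv.mul_left_dvd]
    rw [h1, h2, map_dvd_iff]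
  let φ : CurveGermRing f →ₐ[ℂ] (Fin r → A) :=
    Ideal.Quotient.liftₐ (Ideal.span {(f : MvPowerSeries (Fin 2) ℂ)}) E (by
      intro a ha
      rw [hker]
      exact Ideal.mem_span_singleton.1 ha)
  have hφ : ∀ s : MvPowerSeries (Fin 2) ℂ, φ (Ideal.Quotient.mk _ s) = E s := fun s => rfl
  have hrange : LinearMap.range φ.toLinearMap = Msub B Finset.univ := by
    ext z
    rw [mem_Msub]
    constructor
    · rintro ⟨s, rfl⟩
      obtain ⟨s, rfl⟩ := Ideal.Quotient.mk_surjective s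
      exact ⟨Th c s, fun i _ => rfl⟩
    · rintro ⟨p, hp⟩
      refine ⟨Ideal.Quotient.mk _ ((Th c).symm p), ?_⟩
      ext1 i
      rw [hp i (Finset.mem_univ i)]
      change (B i).ev (Th c ((Th c).symm p)) = _
      rw [AlgEquiv.apply_symm_apply]
  refine ⟨φ, ?_, ?_, ?_, ?_⟩
  · rw [injective_iff_map_eq_zero]
    intro a ha
    obtain ⟨s, rfl⟩ := Ideal.Quotient.mk_surjective a
    rw [hφ, hker] at ha
    exact Ideal.Quotient.eq_zero_iff_mem.2 (Ideal.mem_span_singleton.2 ha)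
  · rw [hrange]; exact hfin
  · refine ⟨Ideal.Quotient.mk _ ((Th c).symm ((Polynomial.C PowerSeries.X : Polynomial A) : T)), ?_⟩
    intro i
    have : φ (Ideal.Quotient.mk _ ((Th c).symm ((Polynomial.C PowerSeries.X : Polynomial A) : T))) i =
        PowerSeries.X ^ (W i).natDegree := by
      rw [hφ, hE, AlgEquiv.apply_symm_apply, (B i).hev, Polynomial.eval₂_C]
      exact PowerSeries.expand_X _ _
    rw [this]
    exact transc (B i).he
  · rw [hrange, ← icod_equiv (Th c)]
    rw [Fintype.card_fin] at hcount
    rw [← hcount]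
    congr 2
    rw [Ideal.map_span, Set.image_pair, dx_La, derivative_La, Th_coe, Th_coe, Polynomial.coe_add,
      Polynomial.coe_mul]
    exact span_pair_aux _ _ _

end MF

/-- Milnor's formula `μ(f) = 2δ(f) − r + 1` (Proposition 2.4): for a polynomial `f` vanishing at
the origin whose image `F` in `ℂ[[x,y]]` is reduced with `r` irreducible (formal) factors. -/
theorem milnor_formula (f : MvPolynomial (Fin 2) ℂ) (h0 : constantCoeff f = 0)
    (r : ℕ) (hr : 1 ≤ r) (u : (MvPowerSeries (Fin 2) ℂ)ˣ)
    (g : Fin r → MvPowerSeries (Fin 2) ℂ)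
    (hirr : ∀ i, Irreducible (g i))
    (hna : ∀ i j, i ≠ j → ¬ Associated (g i) (g j))
    (hF : (↑f : MvPowerSeries (Fin 2) ℂ) = ↑u * ∏ i, g i)
    (K : Type) [CommRing K] [Algebra (CurveGermRing f) K]
    [IsFractionRing (CurveGermRing f) K] [Algebra ℂ K]
    [IsScalarTower ℂ (CurveGermRing f) K] :
    milnorNumber f + r = 2 * deltaInvariant f K + 1 := by
  obtain ⟨φ, hinj, hcod, ⟨x, hx⟩, hmain⟩ := MF.final f h0 r u g hirr hna hF
  have hd := MF.normal φ hinj hcod x hx K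
  have hd2 : ((deltaInvariant f K : ℕ) : ℕ∞) = MF.cod (LinearMap.range φ.toLinearMap) := hd
  rw [← hd2] at hmain
  have hfin : MF.icod (Ideal.span {(↑(pderiv 0 f) : MvPowerSeries (Fin 2) ℂ),
        (↑(pderiv 1 f) : MvPowerSeries (Fin 2) ℂ)}) ≠ ⊤ := by
    intro h
    rw [h, top_add] at hmain
    exact ENat.natCast_ne_top (2 * deltaInvariant f K + 1) (by rw [hmain]; push_cast; rfl)
  have hm : ((milnorNumber f : ℕ) : ℕ∞) = MF.icod (Ideal.span
      {(↑(pderiv 0 f) : MvPowerSeries (Fin 2) ℂ), (↑(pderiv 1 f) : MvPowerSeries (Fin 2) ℂ)}) := by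
    have h1 := MF.finite_of_cod hfin
    have h2 : Module.Finite ℂ (MvPowerSeries (Fin 2) ℂ ⧸ Ideal.span
        {(↑(pderiv 0 f) : MvPowerSeries (Fin 2) ℂ), (↑(pderiv 1 f) : MvPowerSeries (Fin 2) ℂ)}) :=
      Module.Finite.equiv (Submodule.Quotient.restrictScalarsEquiv ℂ _)
    rw [MF.icod_eq, Module.length_eq_finrank]
    rfl
  rw [← hm] at hmain
  exact_mod_cast hmain
end
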